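/- arXiv:2306.15216 — 5 statements merged into one kernel-verified Lean document; each statement's English description precedes it below -/
import Mathlib

section
/- Let k ≥ 1 be an integer and let a be an integer with 0 ≤ a ≤ ⌊(k−1)/2⌋. Then the dimension of the ℚ-vector subspace of ℝ spanned by the set of real numbers { IKM_k(a, 2j) : j ∈ ℤ, j ≥ 0 } is at most ⌊(k+1)/2⌋. -/
/-!
For a product of `k` solutions `y₁, …, y_k` of the Bessel equation `θ² y = t² y`, `θ = t d/dt`, let
`e_j` be the sum over `j`-element sets `S` of `∏_{i ∈ S} θ y_i * ∏_{i ∉ S} y_i`. Then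
`θ e_j = (j + 1) e_{j+1} + (k - j + 1) t² e_{j-1}` (`hasDerivAt_esym`). Integrating against `t ^ n`
and integrating by parts, the moments `M_j(n) = ∫ e_j t ^ n` satisfy
`(j + 1) M_{j+1}(n) = -(n + 1) M_j(n) - (k - j + 1) M_{j-1}(n + 2)` (`moment_one`, `moment_succ`).

Hence `M_j(n)` is a rational combination of `M_0(n), M_0(n + 2), …, M_0(n + 2 ⌊j/2⌋)`, and a sign
argument shows that for `j ≤ k + 1` the coefficient of the last term is nonzero
(`leadMod_of_rec`). As `e_{k+1} = 0`, taking `j = k + 1` expresses `M_0(n + 2 ⌊(k+1)/2⌋)` through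
the `⌊(k+1)/2⌋` preceding moments, so those with `n = 0` span everything (`rank_le_of_rec`).

For `a` factors `I₀` and `b = k - a > a` factors `K₀`, all integrals converge and the boundary terms
vanish because `e_j = O(t^(-1/2) e^(-t/2))` on `(0, ∞)` (`esym_besselList_bound`). That estimate
rests on `|K₀|, |t K₀'| ≤ C (1 + t)² t^(-ε) e^(-t)` with `ε = 1 / (2 b)` (`exists_Kn_bound`).
-/

open MeasureTheory Real

/-- The modified Bessel function `I₀`. -/
noncomputable def I0 (t : ℝ) : ℝ := (1 / π) * ∫ θ in (0:ℝ)..π, Real.exp (t * Real.cos θ)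

/-- The modified Bessel function `K₀`. -/
noncomputable def K0 (t : ℝ) : ℝ := ∫ u in Set.Ioi (0:ℝ), Real.exp (-t * Real.cosh u)

/-- The Bessel moment `IKM_k(a,b) = ∫₀^∞ I₀(t)^a K₀(t)^(k-a) t^b dt`. -/
noncomputable def IKM (k a b : ℕ) : ℝ :=
  ∫ t in Set.Ioi (0:ℝ), I0 t ^ a * K0 t ^ (k - a) * t ^ b

namespace BesselMoments

open Set Filter Topology

/-! ### Elimination -/

/-- The `ℚ`-span of `f n, f (n + 2), …, f (n + 2 * (m - 1))`. -/
noncomputable def stepSpan (f : ℕ → ℝ) (n m : ℕ) : Submodule ℚ ℝ :=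
  Submodule.span ℚ ((fun i => f (n + 2 * i)) '' Set.Iio m)

lemma mem_stepSpan (f : ℕ → ℝ) {n m i : ℕ} (h : i < m) : f (n + 2 * i) ∈ stepSpan f n m :=
  Submodule.subset_span ⟨i, h, rfl⟩

lemma stepSpan_mono (f : ℕ → ℝ) {n m m' : ℕ} (h : m ≤ m') : stepSpan f n m ≤ stepSpan f n m' :=
  Submodule.span_mono (Set.image_mono (Set.Iio_subset_Iio h))

lemma stepSpan_shift (f : ℕ → ℝ) (n m : ℕ) : stepSpan f (n + 2) m ≤ stepSpan f n (m + 1) := by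
  refine Submodule.span_le.2 ?_
  rintro _ ⟨i, hi, rfl⟩
  have := mem_stepSpan f (n := n) (m := m + 1) (i := i + 1) (by simpa using hi)
  have e : n + 2 * (i + 1) = n + 2 + 2 * i := by ring
  rwa [e] at this

/-- `LeadMod M j n`: modulo lower terms, `M j n` is a rational multiple of `M 0 (n + 2 * (j / 2))`
whose coefficient has the sign of `(-1) ^ ((j + 1) / 2)`; in particular it is nonzero. -/
def LeadMod (M : ℕ → ℕ → ℝ) (j n : ℕ) : Prop :=
  ∃ c : ℚ, 0 < (-1) ^ ((j + 1) / 2) * c ∧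
    M j n - c • M 0 (n + 2 * (j / 2)) ∈ stepSpan (M 0) n (j / 2)

/-- The signs are what prevents cancellation of leading coefficients: for even `j` only one of the
two terms of the recursion contributes, for odd `j` both contribute with the same sign. -/
lemma leadMod_of_rec (M : ℕ → ℕ → ℝ) (k : ℕ)
    (h0 : ∀ n : ℕ, M 1 n = -((n : ℝ) + 1) * M 0 n)
    (h1 : ∀ j n : ℕ, ((j : ℝ) + 2) * M (j + 2) n
      = -((n : ℝ) + 1) * M (j + 1) n - ((k : ℝ) - j) * M j (n + 2))
    (j : ℕ) (hj : j ≤ k + 1) (n : ℕ) : LeadMod M j n := by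
  induction j using Nat.strong_induction_on generalizing n with
  | _ j ih =>
  match j, hj, ih with
  | 0, _, _ => exact ⟨1, by norm_num, by simp⟩
  | 1, _, _ =>
    refine ⟨-((n : ℚ) + 1), by norm_num; positivity, ?_⟩
    have : M 1 n - (-((n : ℚ) + 1)) • M 0 (n + 2 * (1 / 2)) = 0 := by
      rw [h0, Rat.smul_def]; push_cast; norm_num
    rw [this]; exact zero_mem _
  | j + 2, hj, ih =>
    obtain ⟨c, hc, hcm⟩ := ih j (by omega) (by omega) (n + 2)
    obtain ⟨d, hd, hdm⟩ := ih (j + 1) (by omega) (by omega) n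
    have hkj : (0 : ℚ) < (k : ℚ) - j := by
      have : (j : ℚ) + 1 ≤ k := by exact_mod_cast (by omega : j + 1 ≤ k)
      linarith
    have hj2 : (0 : ℚ) < (j : ℚ) + 2 := by positivity
    have hj2r : ((j : ℝ) + 2) ≠ 0 := by positivity
    have key : M (j + 2) n = (-((n : ℚ) + 1) / (j + 2)) • M (j + 1) n
        + (-((k : ℚ) - j) / (j + 2)) • M j (n + 2) := by
      have := h1 j n
      simp only [Rat.smul_def]; push_cast
      field_simp
      linarith
    obtain ⟨i, rfl | rfl⟩ := Nat.even_or_odd' j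
    · have e1 : (2 * i + 1 + 1) / 2 = i + 1 := by omega
      have e2 : (2 * i + 1) / 2 = i := by omega
      have e3 : (2 * i) / 2 = i := by omega
      have e4 : (2 * i + 2) / 2 = i + 1 := by omega
      have e5 : (2 * i + 2 + 1) / 2 = i + 1 := by omega
      have e6 : n + 2 + 2 * i = n + 2 * (i + 1) := by ring
      rw [e2] at hc hdm
      rw [e3, e6] at hcm
      refine ⟨(-((k : ℚ) - (2 * i : ℕ)) / ((2 * i : ℕ) + 2)) * c, ?_, ?_⟩
      · rw [e5, pow_succ]
        have : 0 < (((k : ℚ) - (2 * i : ℕ)) / ((2 * i : ℕ) + 2)) * ((-1) ^ i * c) := by positivity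
        linear_combination this
      · rw [e4, key, mul_smul]
        have hA : M (2 * i + 1) n ∈ stepSpan (M 0) n (i + 1) := by
          have := (stepSpan (M 0) n (i + 1)).add_mem (stepSpan_mono (M 0) (Nat.le_succ i) hdm)
            ((stepSpan (M 0) n (i + 1)).smul_mem d (mem_stepSpan (M 0) (Nat.lt_succ_self i)))
          simpa using this
        have hB := (stepSpan (M 0) n (i + 1)).smul_mem
          (-((k : ℚ) - (2 * i : ℕ)) / ((2 * i : ℕ) + 2)) (stepSpan_shift (M 0) n i hcm)
        have := (stepSpan (M 0) n (i + 1)).add_mem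
          ((stepSpan (M 0) n (i + 1)).smul_mem (-((n : ℚ) + 1) / ((2 * i : ℕ) + 2)) hA) hB
        rw [smul_sub] at this
        rwa [add_sub_assoc]
    · have e1 : (2 * i + 1 + 1) / 2 = i + 1 := by omega
      have e2 : (2 * i + 1) / 2 = i := by omega
      have e4 : (2 * i + 1 + 2) / 2 = i + 1 := by omega
      have e5 : (2 * i + 1 + 2 + 1) / 2 = i + 2 := by omega
      have e7 : (2 * i + 1 + 1 + 1) / 2 = i + 1 := by omega
      have e6 : n + 2 + 2 * i = n + 2 * (i + 1) := by ring
      rw [e1] at hc hdm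
      rw [e7] at hd
      rw [e2, e6] at hcm
      refine ⟨(-((n : ℚ) + 1) / ((2 * i + 1 : ℕ) + 2)) * d
        + (-((k : ℚ) - (2 * i + 1 : ℕ)) / ((2 * i + 1 : ℕ) + 2)) * c, ?_, ?_⟩
      · rw [e5, pow_succ]
        have : 0 < (((k : ℚ) - (2 * i + 1 : ℕ)) / ((2 * i + 1 : ℕ) + 2)) * ((-1) ^ (i + 1) * c)
          + (((n : ℚ) + 1) / ((2 * i + 1 : ℕ) + 2)) * ((-1) ^ (i + 1) * d) := by positivity
        linear_combination this
      · rw [e4, key, add_smul, mul_smul, mul_smul]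
        have hA := (stepSpan (M 0) n (i + 1)).smul_mem
          (-((n : ℚ) + 1) / ((2 * i + 1 : ℕ) + 2)) hdm
        have hB := (stepSpan (M 0) n (i + 1)).smul_mem
          (-((k : ℚ) - (2 * i + 1 : ℕ)) / ((2 * i + 1 : ℕ) + 2)) (stepSpan_shift (M 0) n i hcm)
        have := (stepSpan (M 0) n (i + 1)).add_mem hA hB
        rw [smul_sub, smul_sub] at this
        rwa [add_sub_add_comm]

lemma rank_le_of_rec (M : ℕ → ℕ → ℝ) (k : ℕ)
    (h0 : ∀ n : ℕ, M 1 n = -((n : ℝ) + 1) * M 0 n)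
    (h1 : ∀ j n : ℕ, ((j : ℝ) + 2) * M (j + 2) n
      = -((n : ℝ) + 1) * M (j + 1) n - ((k : ℝ) - j) * M j (n + 2))
    (hlast : ∀ n, M (k + 1) n = 0) :
    Module.rank ℚ ↥(Submodule.span ℚ (Set.range fun j : ℕ => M 0 (2 * j)))
      ≤ ((k + 1) / 2 : ℕ) := by
  set m := (k + 1) / 2 with hm
  have hstep : ∀ n, M 0 (n + 2 * m) ∈ stepSpan (M 0) n m := by
    intro n
    obtain ⟨c, hc, hcm⟩ := leadMod_of_rec M k h0 h1 (k + 1) le_rfl n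
    have hc0 : c ≠ 0 := by rintro rfl; simp at hc
    rw [hlast, zero_sub, neg_mem_iff, ← hm] at hcm
    exact ((stepSpan (M 0) n m).smul_mem_iff hc0).1 hcm
  have hall : ∀ j, M 0 (2 * j) ∈ stepSpan (M 0) 0 m := by
    intro j
    induction j using Nat.strong_induction_on with
    | _ j ih =>
    by_cases hjm : j < m
    · simpa using mem_stepSpan (M 0) (n := 0) hjm
    · have := hstep (2 * (j - m))
      rw [show 2 * (j - m) + 2 * m = 2 * j by omega] at this
      refine (Submodule.span_le.2 ?_ : stepSpan (M 0) (2 * (j - m)) m ≤ _) this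
      rintro _ ⟨i, hi, rfl⟩
      have hi' : i < m := hi
      have := ih (j - m + i) (by omega)
      rwa [mul_add] at this
  have hle : Submodule.span ℚ (Set.range fun j : ℕ => M 0 (2 * j)) ≤ stepSpan (M 0) 0 m := by
    refine Submodule.span_le.2 ?_
    rintro _ ⟨j, rfl⟩
    exact hall j
  refine (Submodule.rank_mono hle).trans ((rank_span_le _).trans (Cardinal.mk_image_le.trans ?_))
  simp

/-! ### Elementary symmetric functions of pairs -/

/-- For a list of pairs `(y, z)` of functions, `esym l j` is the coefficient of `x ^ j` in
`∏ (y + x z)`: the sum over `j`-element subsets `S` of the list of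
`∏_{S} z * ∏_{Sᶜ} y`. It is applied with `z = t y'`. -/
noncomputable def esym : List ((ℝ → ℝ) × (ℝ → ℝ)) → ℕ → ℝ → ℝ
  | [], 0, _ => 1
  | [], _ + 1, _ => 0
  | p :: l, 0, t => p.1 t * esym l 0 t
  | p :: l, j + 1, t => p.1 t * esym l (j + 1) t + p.2 t * esym l j t

lemma esym_eq_zero (l : List ((ℝ → ℝ) × (ℝ → ℝ))) (j : ℕ) (t : ℝ) (h : l.length < j) :
    esym l j t = 0 := by
  induction l generalizing j with
  | nil => obtain ⟨j, rfl⟩ : ∃ i, j = i + 1 := ⟨j - 1, by simp at h; omega⟩; rfl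
  | cons p l ih =>
    obtain ⟨j, rfl⟩ : ∃ i, j = i + 1 := ⟨j - 1, by omega⟩
    simp only [List.length_cons] at h
    simp [esym, ih (j + 1) (by omega), ih j (by omega)]

lemma hasDerivAt_esym {t : ℝ} (ht : 0 < t) (l : List ((ℝ → ℝ) × (ℝ → ℝ)))
    (hl : ∀ p ∈ l, HasDerivAt p.1 (p.2 t / t) t ∧ HasDerivAt p.2 (t * p.1 t) t) :
    HasDerivAt (esym l 0) (esym l 1 t / t) t ∧ ∀ j : ℕ, HasDerivAt (esym l (j + 1))
      (((j : ℝ) + 2) * esym l (j + 2) t / t + t * ((l.length : ℝ) - j) * esym l j t) t := by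
  induction l with
  | nil =>
    refine ⟨?_, fun j => ?_⟩
    · have : esym [] 0 = fun _ => 1 := rfl
      rw [this]
      simpa [esym] using hasDerivAt_const t (1 : ℝ)
    · have : esym [] (j + 1) = fun _ => 0 := rfl
      rw [this]
      refine HasDerivAt.congr_deriv (hasDerivAt_const t (0 : ℝ)) ?_
      cases j <;> simp [esym]
  | cons p l ih =>
    obtain ⟨hp1, hp2⟩ := hl p (by simp)
    obtain ⟨i0, i1⟩ := ih fun q hq => hl q (by simp [hq])
    have ht' := ht.ne'
    refine ⟨?_, fun j => ?_⟩
    · have : esym (p :: l) 0 = fun t => p.1 t * esym l 0 t := rfl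
      rw [this]
      refine HasDerivAt.congr_deriv (hp1.mul i0) ?_
      simp only [esym]; ring
    · have : esym (p :: l) (j + 1) = fun t => p.1 t * esym l (j + 1) t + p.2 t * esym l j t := rfl
      rw [this]
      cases j with
      | zero =>
        refine HasDerivAt.congr_deriv ((hp1.mul (i1 0)).add (hp2.mul i0)) ?_
        simp only [esym, List.length_cons]; push_cast; field_simp; ring
      | succ j =>
        refine HasDerivAt.congr_deriv ((hp1.mul (i1 (j + 1))).add (hp2.mul (i1 j))) ?_
        simp only [esym, List.length_cons]; push_cast; field_simp; ring

lemma abs_esym_replicate_append (p : (ℝ → ℝ) × (ℝ → ℝ)) (l : List ((ℝ → ℝ) × (ℝ → ℝ)))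
    (t B D : ℝ) (h1 : |p.1 t| ≤ B) (h2 : |p.2 t| ≤ B) (hD : ∀ j, |esym l j t| ≤ D) (m j : ℕ) :
    |esym (List.replicate m p ++ l) j t| ≤ (2 * B) ^ m * D := by
  have hB : 0 ≤ B := (abs_nonneg _).trans h1
  have hD0 : 0 ≤ D := (abs_nonneg _).trans (hD 0)
  induction m generalizing j with
  | zero => simpa using hD j
  | succ m ih =>
    rw [List.replicate_succ, List.cons_append]
    have hP : 0 ≤ (2 * B) ^ m * D := by positivity
    cases j with
    | zero =>
      simp only [esym, abs_mul]
      have := mul_le_mul h1 (ih 0) (abs_nonneg _) hB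
      have h3 : 0 ≤ B * ((2 * B) ^ m * D) := by positivity
      rw [pow_succ]; linarith
    | succ j =>
      simp only [esym]
      refine (abs_add_le _ _).trans ?_
      rw [abs_mul, abs_mul]
      have := mul_le_mul h1 (ih (j + 1)) (abs_nonneg _) hB
      have := mul_le_mul h2 (ih j) (abs_nonneg _) hB
      rw [pow_succ]; linarith

lemma esym_zero_replicate_append (p : (ℝ → ℝ) × (ℝ → ℝ)) (l : List ((ℝ → ℝ) × (ℝ → ℝ)))
    (t : ℝ) (m : ℕ) : esym (List.replicate m p ++ l) 0 t = p.1 t ^ m * esym l 0 t := by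
  induction m with
  | zero => simp
  | succ m ih => rw [List.replicate_succ, List.cons_append, pow_succ]; simp only [esym, ih]; ring

/-! ### Integration by parts -/

lemma integrableOn_bound (n : ℕ) :
    IntegrableOn (fun t : ℝ => t ^ (-(1 / 2) : ℝ) * exp (-t / 2) * t ^ n) (Ioi 0) := by
  have h := integrableOn_rpow_mul_exp_neg_mul_rpow (p := 1) (s := (n : ℝ) - 1 / 2) (b := 1 / 2)
    (by have : (0 : ℝ) ≤ n := by positivity
        linarith) one_pos (by norm_num)
  refine h.congr_fun (fun t ht => ?_) measurableSet_Ioi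
  have ht' : 0 < t := ht
  simp only [rpow_one]
  rw [sub_eq_add_neg, rpow_add ht', rpow_natCast, show -(1 / 2) * t = -t / 2 by ring]
  ring

lemma integrableOn_of_bound {f : ℝ → ℝ} {C : ℝ} (hf : ContinuousOn f (Ioi 0))
    (hb : ∀ t > 0, |f t| ≤ C * (t ^ (-(1 / 2) : ℝ) * exp (-t / 2))) (n : ℕ) :
    IntegrableOn (fun t => f t * t ^ n) (Ioi 0) := by
  refine Integrable.mono' ((integrableOn_bound n).const_mul C)
    ((hf.mul (by fun_prop)).aestronglyMeasurable measurableSet_Ioi) ?_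
  filter_upwards [ae_restrict_mem measurableSet_Ioi] with t ht
  have ht' : 0 < t := ht
  rw [norm_eq_abs, abs_mul, abs_of_pos (pow_pos ht' n), ← mul_assoc]
  exact mul_le_mul_of_nonneg_right (hb t ht') (by positivity)

lemma tendsto_bound_atTop (C : ℝ) (n : ℕ) :
    Tendsto (fun t : ℝ => C * (t ^ (-(1 / 2) : ℝ) * exp (-t / 2)) * t ^ (n + 1)) atTop (𝓝 0) := by
  have h := (tendsto_rpow_mul_exp_neg_mul_atTop_nhds_zero ((n : ℝ) + 1 - 1 / 2) (1 / 2)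
    (by norm_num)).const_mul C
  rw [mul_zero] at h
  refine h.congr' ?_
  filter_upwards [eventually_gt_atTop 0] with t ht
  rw [sub_eq_add_neg, rpow_add ht, ← Nat.cast_succ, rpow_natCast,
    show -(1 / 2) * t = -t / 2 by ring]
  simp only [Nat.succ_eq_add_one]; ring

lemma tendsto_bound_zero (C : ℝ) (n : ℕ) :
    Tendsto (fun t : ℝ => C * (t ^ (-(1 / 2) : ℝ) * exp (-t / 2)) * t ^ (n + 1))
      (𝓝[>] 0) (𝓝 0) := by
  have hc : Continuous fun t : ℝ => C * (t ^ (1 / 2 : ℝ) * exp (-t / 2)) * t ^ n := by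
    have : Continuous fun t : ℝ => t ^ (1 / 2 : ℝ) := continuous_rpow_const (by norm_num)
    fun_prop
  have h := (hc.tendsto 0).mono_left (nhdsWithin_le_nhds (s := Ioi 0))
  simp only [zero_rpow (show (1 / 2 : ℝ) ≠ 0 by norm_num), zero_mul, mul_zero] at h
  refine h.congr' ?_
  filter_upwards [self_mem_nhdsWithin] with t ht
  have ht' : 0 < t := ht
  rw [show (1 / 2 : ℝ) = -(1 / 2) + 1 by norm_num, rpow_add ht', rpow_one]
  norm_num
  ring

/-- If `t f' = g` on `(0, ∞)`, then `∫ g t ^ n = -(n + 1) ∫ f t ^ n`; the bounds kill the boundary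
terms. -/
lemma integral_by_parts {f g : ℝ → ℝ} {C : ℝ}
    (hd : ∀ t > 0, HasDerivAt f (g t / t) t)
    (hb : ∀ t > 0, |f t| ≤ C * (t ^ (-(1 / 2) : ℝ) * exp (-t / 2)))
    (n : ℕ) (hg : IntegrableOn (fun t => g t * t ^ n) (Ioi 0)) :
    ∫ t in Ioi 0, g t * t ^ n = -((n : ℝ) + 1) * ∫ t in Ioi 0, f t * t ^ n := by
  have hf : ContinuousOn f (Ioi 0) := fun t ht => (hd t ht).continuousAt.continuousWithinAt
  have hfi := integrableOn_of_bound hf hb n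
  have hbd : ∀ t : ℝ, 0 < t → ‖f t * t ^ (n + 1)‖
      ≤ C * (t ^ (-(1 / 2) : ℝ) * exp (-t / 2)) * t ^ (n + 1) := by
    intro t ht
    rw [norm_eq_abs, abs_mul, abs_of_pos (pow_pos ht _)]
    exact mul_le_mul_of_nonneg_right (hb t ht) (by positivity)
  have key := integral_Ioi_of_hasDerivAt_of_tendsto (a := 0) (m := 0)
    (f := fun t => f t * t ^ (n + 1)) (f' := fun t => g t * t ^ n + ((n : ℝ) + 1) * (f t * t ^ n))
    ?_ ?_ (hg.add (hfi.const_mul _)) ?_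
  · rw [integral_add hg (hfi.const_mul _), integral_const_mul] at key
    simp at key
    linarith
  · rw [← continuousWithinAt_Ioi_iff_Ici, ContinuousWithinAt]
    simp only [ne_eq, Nat.add_eq_zero_iff, one_ne_zero, and_false, not_false_eq_true, zero_pow,
      mul_zero]
    refine squeeze_zero_norm' ?_ (tendsto_bound_zero C n)
    filter_upwards [self_mem_nhdsWithin] with t ht using hbd t ht
  · intro t ht
    have ht' : t ≠ 0 := (show 0 < t from ht).ne'
    refine HasDerivAt.congr_deriv ((hd t ht).mul (hasDerivAt_pow (n + 1) t)) ?_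
    push_cast
    field_simp
    rw [pow_succ]; ring
  · refine squeeze_zero_norm' ?_ (tendsto_bound_atTop C n)
    filter_upwards [eventually_gt_atTop 0] with t ht using hbd t ht

/-! ### The functions `I₀` and `K₀` -/

/-- The `n`-th derivative of `I₀`, as an integral. -/
noncomputable def In (n : ℕ) (t : ℝ) : ℝ :=
  (1 / π) * ∫ θ in (0 : ℝ)..π, cos θ ^ n * exp (t * cos θ)

/-- `(-1) ^ n` times the `n`-th derivative of `K₀`, as an integral. -/
noncomputable def Kn (n : ℕ) (t : ℝ) : ℝ :=
  ∫ u in Ioi (0 : ℝ), cosh u ^ n * exp (-t * cosh u)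

lemma In_zero : In 0 = I0 := by ext t; simp [In, I0]

lemma Kn_zero : Kn 0 = K0 := by ext t; simp [Kn, K0]

lemma hasDerivAt_In (n : ℕ) (t : ℝ) : HasDerivAt (In n) (In (n + 1) t) t := by
  have h := intervalIntegral.hasDerivAt_integral_of_dominated_loc_of_deriv_le (μ := volume)
    (a := 0) (b := π) (x₀ := t) (s := Metric.ball t 1)
    (F := fun x θ => cos θ ^ n * exp (x * cos θ))
    (F' := fun x θ => cos θ ^ (n + 1) * exp (x * cos θ)) (bound := fun _ => exp (|t| + 1))
    (Metric.ball_mem_nhds t one_pos)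
    (Eventually.of_forall fun x => (by fun_prop : Continuous _).aestronglyMeasurable)
    ((by fun_prop : Continuous _).intervalIntegrable _ _)
    (by fun_prop : Continuous _).aestronglyMeasurable
    (Eventually.of_forall fun θ _ x hx => ?_) (by simp)
    (Eventually.of_forall fun θ _ x hx => ?_)
  · exact h.2.const_mul (1 / π)
  · have hx' : |x| ≤ |t| + 1 := by
      have h1 : |x - t| < 1 := by simpa [Real.dist_eq] using hx
      have h2 := abs_add_le (x - t) t
      rw [sub_add_cancel] at h2
      linarith
    rw [norm_eq_abs, abs_mul, abs_pow, abs_exp]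
    have h1 : |cos θ| ^ (n + 1) ≤ 1 := pow_le_one₀ (abs_nonneg _) (abs_cos_le_one θ)
    have h2 : x * cos θ ≤ |t| + 1 := by
      refine (le_abs_self _).trans ?_
      rw [abs_mul]
      exact (mul_le_of_le_one_right (abs_nonneg _) (abs_cos_le_one θ)).trans hx'
    calc _ ≤ 1 * exp (|t| + 1) := by gcongr
      _ = _ := one_mul _
  · refine HasDerivAt.congr_deriv ((((hasDerivAt_id x).mul_const (cos θ)).exp.const_mul (cos θ ^ n))) ?_
    simp only [id]; ring

lemma abs_In_le (n : ℕ) {t : ℝ} (ht : 0 < t) : |In n t| ≤ exp t := by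
  have h := intervalIntegral.norm_integral_le_of_norm_le_const (a := 0) (b := π) (C := exp t)
    (f := fun θ => cos θ ^ n * exp (t * cos θ)) fun θ _ => ?_
  · rw [In, abs_mul, abs_of_pos (by positivity)]
    rw [norm_eq_abs, sub_zero, abs_of_pos pi_pos] at h
    calc _ ≤ 1 / π * (exp t * π) := by gcongr
      _ = exp t := by field_simp
  · rw [norm_eq_abs, abs_mul, abs_pow, abs_exp]
    have h1 : |cos θ| ^ n ≤ 1 := pow_le_one₀ (abs_nonneg _) (abs_cos_le_one θ)
    have h2 : t * cos θ ≤ t := mul_le_of_le_one_right ht.le (cos_le_one θ)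
    calc _ ≤ 1 * exp t := by gcongr
      _ = _ := one_mul _

/-- The Bessel equation for `I₀`. -/
lemma bessel_In (t : ℝ) : t * In 2 t + In 1 t = t * In 0 t := by
  have h := intervalIntegral.integral_eq_sub_of_hasDerivAt (a := 0) (b := π)
    (f := fun θ => sin θ * exp (t * cos θ))
    (f' := fun θ => cos θ ^ 1 * exp (t * cos θ) + t * (cos θ ^ 2 * exp (t * cos θ))
      - t * (cos θ ^ 0 * exp (t * cos θ))) (fun θ _ => ?_)
    ((by fun_prop : Continuous _).intervalIntegrable _ _)
  · rw [intervalIntegral.integral_sub ((by fun_prop : Continuous _).intervalIntegrable _ _)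
      ((by fun_prop : Continuous _).intervalIntegrable _ _),
      intervalIntegral.integral_add ((by fun_prop : Continuous _).intervalIntegrable _ _)
      ((by fun_prop : Continuous _).intervalIntegrable _ _),
      intervalIntegral.integral_const_mul, intervalIntegral.integral_const_mul] at h
    simp only [sin_pi, sin_zero, zero_mul, sub_zero] at h
    simp only [In]
    linear_combination (1 / π) * h
  · refine HasDerivAt.congr_deriv ((hasDerivAt_sin θ).mul ((hasDerivAt_cos θ).const_mul t).exp) ?_
    linear_combination (-t * exp (t * cos θ)) * sin_sq_add_cos_sq θ

lemma cosh_pow_mul_exp_le (n : ℕ) {s : ℝ} (hs : 0 < s) {u : ℝ} (hu : 0 < u) :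
    cosh u ^ n * exp (-s * cosh u) ≤ n.factorial * (2 / s) ^ n * exp (-(s / 2) * u) := by
  have hc := cosh_pos u
  have h1 := pow_div_factorial_le_exp (s / 2 * cosh u) (by positivity) n
  have h2 : u ≤ cosh u := by
    have := self_le_sinh_iff.2 hu.le
    have := sinh_lt_cosh u
    linarith
  have h3 : exp (-s * cosh u) = exp (-(s / 2 * cosh u)) * exp (-(s / 2 * cosh u)) := by
    rw [← exp_add]; ring_nf
  have h4 : cosh u ^ n = n.factorial * (2 / s) ^ n * ((s / 2 * cosh u) ^ n / n.factorial) := by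
    rw [mul_pow, div_pow, div_pow]; field_simp
  calc cosh u ^ n * exp (-s * cosh u)
      = n.factorial * (2 / s) ^ n * ((s / 2 * cosh u) ^ n / n.factorial)
        * (exp (-(s / 2 * cosh u)) * exp (-(s / 2 * cosh u))) := by rw [h3, h4]
    _ ≤ n.factorial * (2 / s) ^ n * exp (s / 2 * cosh u)
        * (exp (-(s / 2 * cosh u)) * exp (-(s / 2 * cosh u))) := by gcongr
    _ = n.factorial * (2 / s) ^ n * exp (-(s / 2 * cosh u)) := by
        rw [mul_assoc, ← mul_assoc (exp (s / 2 * cosh u)), ← exp_add]; simp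
    _ ≤ n.factorial * (2 / s) ^ n * exp (-(s / 2) * u) := by
        have : -(s / 2 * cosh u) ≤ -(s / 2) * u := by nlinarith
        gcongr

lemma integrableOn_cosh (n : ℕ) {s : ℝ} (hs : 0 < s) :
    IntegrableOn (fun u => cosh u ^ n * exp (-s * cosh u)) (Ioi 0) := by
  refine Integrable.mono' ((integrableOn_exp_mul_Ioi (a := -(s / 2)) (by linarith) 0).const_mul
    (n.factorial * (2 / s) ^ n)) (by fun_prop : Continuous _).aestronglyMeasurable ?_
  filter_upwards [ae_restrict_mem measurableSet_Ioi] with u hu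
  have := cosh_pos u
  rw [norm_eq_abs, abs_of_nonneg (by positivity)]
  exact cosh_pow_mul_exp_le n hs hu

lemma hasDerivAt_Kn (n : ℕ) {t : ℝ} (ht : 0 < t) : HasDerivAt (Kn n) (-Kn (n + 1) t) t := by
  have h := hasDerivAt_integral_of_dominated_loc_of_deriv_le (μ := volume.restrict (Ioi (0 : ℝ)))
    (x₀ := t) (s := Ioi (t / 2))
    (F := fun x u => cosh u ^ n * exp (-x * cosh u))
    (F' := fun x u => -(cosh u ^ (n + 1) * exp (-x * cosh u)))
    (bound := fun u => cosh u ^ (n + 1) * exp (-(t / 2) * cosh u))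
    (Ioi_mem_nhds (by linarith))
    (Eventually.of_forall fun x => (by fun_prop : Continuous _).aestronglyMeasurable)
    (integrableOn_cosh n ht)
    (by fun_prop : Continuous _).aestronglyMeasurable
    (Eventually.of_forall fun u x hx => ?_) (integrableOn_cosh (n + 1) (by linarith))
    (Eventually.of_forall fun u x hx => ?_)
  · have h2 := h.2
    rw [integral_neg] at h2
    exact h2
  · have := cosh_pos u
    rw [norm_neg, norm_eq_abs, abs_of_nonneg (by positivity)]
    have hx' : t / 2 < x := hx
    gcongr
  · refine HasDerivAt.congr_deriv ((((hasDerivAt_id x).neg.mul_const (cosh u)).exp.const_mul (cosh u ^ n))) ?_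
    simp only [id, Pi.neg_apply]; ring

/-- The Bessel equation for `K₀`. -/
lemma bessel_Kn {t : ℝ} (ht : 0 < t) : t * Kn 2 t - Kn 1 t = t * Kn 0 t := by
  have i0 := integrableOn_cosh 0 ht
  have i1 := integrableOn_cosh 1 ht
  have i2 := integrableOn_cosh 2 ht
  have h := integral_Ioi_of_hasDerivAt_of_tendsto' (a := 0) (m := 0)
    (f := fun u => sinh u * exp (-t * cosh u))
    (f' := fun u => cosh u ^ 1 * exp (-t * cosh u) - t * (cosh u ^ 2 * exp (-t * cosh u))
      + t * (cosh u ^ 0 * exp (-t * cosh u))) (fun u _ => ?_)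
    ((i1.sub (i2.const_mul t)).add (i0.const_mul t)) ?_
  · rw [integral_add (f := fun u => cosh u ^ 1 * exp (-t * cosh u)
      - t * (cosh u ^ 2 * exp (-t * cosh u))) (Integrable.sub i1 (i2.const_mul t))
      (i0.const_mul t),
      integral_sub i1 (i2.const_mul t), integral_const_mul, integral_const_mul] at h
    simp only [sinh_zero, zero_mul, sub_zero] at h
    simp only [Kn]
    linear_combination -h
  · refine HasDerivAt.congr_deriv ((hasDerivAt_sinh u).mul ((hasDerivAt_cosh u).const_mul (-t)).exp) ?_
    linear_combination (t * exp (-t * cosh u)) * cosh_sq u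
  · have hlim : Tendsto (fun u : ℝ => ((1 : ℕ).factorial : ℝ) * (2 / t) ^ 1 * exp (-(t / 2) * u))
        atTop (𝓝 0) := by
      have : Tendsto (fun u : ℝ => -(t / 2) * u) atTop atBot :=
        tendsto_id.const_mul_atTop_of_neg (by linarith)
      simpa only [mul_zero] using! (tendsto_exp_atBot.comp this).const_mul (((1 : ℕ).factorial : ℝ) * (2 / t) ^ 1)
    refine squeeze_zero_norm' ?_ hlim
    filter_upwards [eventually_gt_atTop 0] with u hu
    refine le_trans ?_ (cosh_pow_mul_exp_le 1 ht hu)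
    rw [norm_eq_abs, abs_mul, abs_exp, pow_one, abs_of_pos (sinh_pos_iff.2 hu)]
    have := sinh_lt_cosh u
    gcongr

/-- Pointwise bound for the integrands of `K₀` and `t K₀'`, from `e⁻ˣ ≤ (1 + x)⁻¹` raised to the
power `ε` with `x = t (cosh u - 1)`, and `(1 + t) (1 + x) ≥ t cosh u`. The exponent `ε` can be
chosen so small that the singularity at `t = 0` of a power of the bound is integrable. -/
lemma kernel_bound {ε : ℝ} (h0 : 0 < ε) (h1 : ε ≤ 1 / 2) {t : ℝ} (ht : 0 < t) (u : ℝ) :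
    (1 + t * cosh u) * exp (-t * cosh u)
      ≤ 6 * (1 + t) ^ 2 * t ^ (-ε) * exp (-t) * exp (-ε * u) := by
  have hc := one_le_cosh u
  set c := cosh u with hcdef
  set x := t * (c - 1) with hx
  have hx0 : 0 ≤ x := mul_nonneg ht.le (by linarith)
  have hA : 1 + t * c ≤ (3 + t) * exp (x / 2) := by
    have e1 := add_one_le_exp (x / 2)
    have e2 : 1 ≤ exp (x / 2) := one_le_exp (by linarith)
    have : 1 + t * c = 1 + t + x := by rw [hx]; ring
    nlinarith
  have hB : t * (exp u / 2) ≤ (1 + t) * (1 + x) := by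
    have e1 : exp u / 2 ≤ c := by
      rw [hcdef, cosh_eq]; have := exp_pos (-u); linarith
    have e2 : t * (exp u / 2) ≤ t * c := by gcongr
    have : t * c = t + x := by rw [hx]; ring
    nlinarith
  have hC : (1 + x) ^ ε ≤ exp (x / 2) := by
    have e1 : (1 + x) ^ ε ≤ (exp x) ^ ε := by
      gcongr; linarith [add_one_le_exp x]
    refine e1.trans ?_
    rw [← exp_mul]
    exact exp_le_exp.2 (by nlinarith)
  have hD : t ^ ε * exp (ε * u) ≤ 2 * (1 + t) * exp (x / 2) := by
    have e0 : t ^ ε * exp (ε * u) = (t * (exp u / 2)) ^ ε * 2 ^ ε := by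
      rw [← mul_rpow (by positivity) (by norm_num), ← mul_div_assoc,
        div_mul_cancel₀ _ (by norm_num), mul_rpow ht.le (exp_pos u).le, ← exp_mul, mul_comm u]
    have e1 : (t * (exp u / 2)) ^ ε ≤ ((1 + t) * (1 + x)) ^ ε := by gcongr
    have e1' := e1.trans_eq (mul_rpow (x := 1 + t) (y := 1 + x) (by positivity) (by positivity))
    have e2 : (1 + t) ^ ε ≤ 1 + t := by
      simpa using rpow_le_rpow_of_exponent_le (x := 1 + t) (by linarith)
        (show ε ≤ 1 by linarith)
    have e3 : (2 : ℝ) ^ ε ≤ 2 := by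
      simpa using rpow_le_rpow_of_exponent_le (x := (2 : ℝ)) (by norm_num)
        (show ε ≤ 1 by linarith)
    calc t ^ ε * exp (ε * u) = (t * (exp u / 2)) ^ ε * 2 ^ ε := e0
      _ ≤ ((1 + t) * exp (x / 2)) * 2 := by
          refine mul_le_mul (e1'.trans ?_) e3 (by positivity) (by positivity)
          gcongr
      _ = _ := by ring
  have hE : exp (-(x / 2)) ≤ 2 * (1 + t) * t ^ (-ε) * exp (-ε * u) := by
    rw [rpow_neg ht.le, neg_mul ε u, exp_neg, exp_neg]
    have : 0 < t ^ ε := rpow_pos_of_pos ht ε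
    field_simp
    linarith
  have hF : exp (-t * c) = exp (-t) * exp (-(x / 2)) * exp (-(x / 2)) := by
    rw [← exp_add, ← exp_add]; congr 1; rw [hx]; ring
  have hG : exp (x / 2) * exp (-(x / 2)) = 1 := by rw [← exp_add]; simp
  calc (1 + t * c) * exp (-t * c)
      ≤ (3 + t) * exp (x / 2) * exp (-t * c) := by gcongr
    _ = (3 + t) * exp (-t) * exp (-(x / 2)) := by
        rw [hF]; linear_combination ((3 + t) * exp (-t) * exp (-(x / 2))) * hG
    _ ≤ (3 * (1 + t)) * exp (-t) * (2 * (1 + t) * t ^ (-ε) * exp (-ε * u)) := by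
        gcongr; linarith
    _ = _ := by ring

lemma exists_Kn_bound {ε : ℝ} (h0 : 0 < ε) (h1 : ε ≤ 1 / 2) :
    ∃ C : ℝ, 0 ≤ C ∧ ∀ t > 0, |Kn 0 t| ≤ C * ((1 + t) ^ 2 * t ^ (-ε) * exp (-t)) ∧
      |-t * Kn 1 t| ≤ C * ((1 + t) ^ 2 * t ^ (-ε) * exp (-t)) := by
  refine ⟨6 * ∫ u in Ioi (0 : ℝ), exp (-ε * u), ?_, fun t ht => ?_⟩
  · have := integral_nonneg (μ := volume.restrict (Ioi (0 : ℝ)))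
      (f := fun u => exp (-ε * u)) (fun u => (exp_pos _).le)
    positivity
  have hi : IntegrableOn (fun u => 6 * (1 + t) ^ 2 * t ^ (-ε) * exp (-t) * exp (-ε * u)) (Ioi 0) :=
    (integrableOn_exp_mul_Ioi (by linarith) 0).const_mul _
  have hval : ∫ u in Ioi (0 : ℝ), 6 * (1 + t) ^ 2 * t ^ (-ε) * exp (-t) * exp (-ε * u)
      = (6 * ∫ u in Ioi (0 : ℝ), exp (-ε * u)) * ((1 + t) ^ 2 * t ^ (-ε) * exp (-t)) := by
    rw [integral_const_mul]; ring
  rw [← hval]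
  constructor
  · rw [← norm_eq_abs]
    refine norm_integral_le_of_norm_le hi (Eventually.of_forall fun u => ?_)
    have := cosh_pos u
    refine le_trans ?_ (kernel_bound h0 h1 ht u)
    rw [norm_eq_abs, abs_of_nonneg (by positivity)]
    gcongr
    rw [pow_zero]
    have : 0 < t * cosh u := by positivity
    linarith
  · rw [Kn, ← integral_const_mul, ← norm_eq_abs]
    refine norm_integral_le_of_norm_le hi (Eventually.of_forall fun u => ?_)
    have := cosh_pos u
    refine le_trans ?_ (kernel_bound h0 h1 ht u)
    rw [norm_eq_abs, abs_mul, abs_neg, abs_of_pos ht, abs_of_nonneg (by positivity), ← mul_assoc]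
    gcongr
    rw [pow_one]
    linarith

/-! ### Moments of products of Bessel functions -/

/-- The list of `a` copies of `(I₀, t I₀')` and `b` copies of `(K₀, t K₀')`. -/
noncomputable def besselList (a b : ℕ) : List ((ℝ → ℝ) × (ℝ → ℝ)) :=
  List.replicate a (In 0, fun t => t * In 1 t) ++
    (List.replicate b (Kn 0, fun t => -t * Kn 1 t) ++ [])

lemma besselList_length (a b : ℕ) : (besselList a b).length = a + b := by simp [besselList]

lemma besselList_deriv (a b : ℕ) {t : ℝ} (ht : 0 < t) :
    ∀ p ∈ besselList a b, HasDerivAt p.1 (p.2 t / t) t ∧ HasDerivAt p.2 (t * p.1 t) t := by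
  intro p hp
  have ht' := ht.ne'
  simp only [besselList, List.append_nil, List.mem_append, List.mem_replicate] at hp
  obtain ⟨-, rfl⟩ | ⟨-, rfl⟩ := hp
  · refine ⟨(hasDerivAt_In 0 t).congr_deriv (by field_simp),
      ((hasDerivAt_id t).mul (hasDerivAt_In 1 t)).congr_deriv ?_⟩
    simp only [id]
    linear_combination bessel_In t
  · refine ⟨(hasDerivAt_Kn 0 ht).congr_deriv (by field_simp),
      ((hasDerivAt_id t).neg.mul (hasDerivAt_Kn 1 ht)).congr_deriv ?_⟩
    simp only [id, Pi.neg_apply]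
    linear_combination bessel_Kn ht

lemma one_add_pow_mul_exp_le (m : ℕ) {t : ℝ} (ht : 0 < t) :
    (1 + t) ^ m * exp (-t) ≤ m.factorial * 2 ^ m * exp (1 / 2) * exp (-t / 2) := by
  have h := pow_div_factorial_le_exp ((1 + t) / 2) (by positivity) m
  have h1 : (1 + t) ^ m = m.factorial * 2 ^ m * (((1 + t) / 2) ^ m / m.factorial) := by
    rw [div_pow]; field_simp
  have h2 : exp ((1 + t) / 2) * exp (-t) = exp (1 / 2) * exp (-t / 2) := by
    rw [← exp_add, ← exp_add]; congr 1; ring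
  calc (1 + t) ^ m * exp (-t)
      ≤ m.factorial * 2 ^ m * exp ((1 + t) / 2) * exp (-t) := by rw [h1]; gcongr
    _ = _ := by rw [mul_assoc, h2]; ring

/-- The condition `a < b` gives exponential decay at infinity; at `0` only a power of a logarithm
occurs, which is bounded by `t ^ (-1/2)`. -/
lemma esym_besselList_bound {a b : ℕ} (hab : a < b) :
    ∃ C : ℝ, ∀ j, ∀ t > 0,
      |esym (besselList a b) j t| ≤ C * (t ^ (-(1 / 2) : ℝ) * exp (-t / 2)) := by
  have hb0 : 0 < b := by omega
  have hb : (1 : ℝ) ≤ b := by exact_mod_cast hb0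
  have hε1 : 1 / (2 * (b : ℝ)) ≤ 1 / 2 := by
    apply one_div_le_one_div_of_le <;> linarith
  obtain ⟨C, hC, hK⟩ := exists_Kn_bound (ε := 1 / (2 * (b : ℝ))) (by positivity) hε1
  refine ⟨2 ^ a * (2 * C) ^ b * ((a + 2 * b).factorial * 2 ^ (a + 2 * b) * exp (1 / 2)),
    fun j t ht => ?_⟩
  have hnil : ∀ j, |esym [] j t| ≤ 1 := by
    intro j; cases j <;> simp [esym]
  have h1 := abs_esym_replicate_append (Kn 0, fun t => -t * Kn 1 t) [] t _ 1
    (hK t ht).1 (hK t ht).2 hnil b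
  have hI0 : |In 0 t| ≤ (1 + t) * exp t := by
    have := abs_In_le 0 ht
    have := exp_pos t
    nlinarith
  have hI1 : |t * In 1 t| ≤ (1 + t) * exp t := by
    rw [abs_mul, abs_of_pos ht]
    have := abs_In_le 1 ht
    have := exp_pos t
    nlinarith
  have h2 := abs_esym_replicate_append (In 0, fun t => t * In 1 t) _ t _ _ hI0 hI1 h1 a j
  refine h2.trans ?_
  have e1 : (t ^ (-(1 / (2 * (b : ℝ))))) ^ b = t ^ (-(1 / 2) : ℝ) := by
    rw [← rpow_mul_natCast ht.le]; congr 1; field_simp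
  have e2 : exp t ^ a * exp (-t) ^ b ≤ exp (-t) := by
    obtain ⟨c, rfl⟩ : ∃ c, b = a + c + 1 := ⟨b - a - 1, by omega⟩
    have : exp t * exp (-t) = 1 := by rw [← exp_add]; simp
    rw [pow_succ, pow_add, ← mul_assoc, ← mul_assoc, ← mul_pow, this, one_pow, one_mul]
    exact mul_le_of_le_one_left (exp_pos _).le
      (pow_le_one₀ (exp_pos _).le (exp_le_one_iff.2 (by linarith)))
  have e3 := one_add_pow_mul_exp_le (a + 2 * b) ht
  have ht2 : 0 < t ^ (-(1 / 2) : ℝ) := rpow_pos_of_pos ht _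
  calc (2 * ((1 + t) * exp t)) ^ a
        * ((2 * (C * ((1 + t) ^ 2 * t ^ (-(1 / (2 * (b : ℝ)))) * exp (-t)))) ^ b * 1)
      = 2 ^ a * (2 * C) ^ b * t ^ (-(1 / 2) : ℝ)
          * ((1 + t) ^ (a + 2 * b) * (exp t ^ a * exp (-t) ^ b)) := by
        rw [← e1]; simp only [mul_pow, pow_add, pow_mul]; ring
    _ ≤ 2 ^ a * (2 * C) ^ b * t ^ (-(1 / 2) : ℝ) * ((1 + t) ^ (a + 2 * b) * exp (-t)) := by
        gcongr
    _ ≤ 2 ^ a * (2 * C) ^ b * t ^ (-(1 / 2) : ℝ)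
          * ((a + 2 * b).factorial * 2 ^ (a + 2 * b) * exp (1 / 2) * exp (-t / 2)) := by
        gcongr
    _ = _ := by ring

/-- The moments of the symmetric functions of the Bessel functions and their derivatives. -/
noncomputable def moment (a b j n : ℕ) : ℝ :=
  ∫ t in Ioi (0 : ℝ), esym (besselList a b) j t * t ^ n

lemma moment_zero (a b n : ℕ) :
    moment a b 0 n = ∫ t in Ioi (0 : ℝ), I0 t ^ a * K0 t ^ b * t ^ n := by
  simp only [moment, besselList, esym_zero_replicate_append, esym, In_zero, Kn_zero, mul_one]

lemma integrableOn_esym {a b : ℕ} (hab : a < b) (j n : ℕ) :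
    IntegrableOn (fun t => esym (besselList a b) j t * t ^ n) (Ioi 0) := by
  obtain ⟨C, hC⟩ := esym_besselList_bound hab
  refine integrableOn_of_bound (fun t ht => ?_) (hC j) n
  have h := hasDerivAt_esym ht _ (besselList_deriv a b ht)
  cases j with
  | zero => exact h.1.continuousAt.continuousWithinAt
  | succ j => exact (h.2 j).continuousAt.continuousWithinAt

lemma moment_one {a b : ℕ} (hab : a < b) (n : ℕ) :
    moment a b 1 n = -((n : ℝ) + 1) * moment a b 0 n := by
  obtain ⟨C, hC⟩ := esym_besselList_bound hab
  exact integral_by_parts (fun t ht => (hasDerivAt_esym ht _ (besselList_deriv a b ht)).1)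
    (hC 0) n (integrableOn_esym hab 1 n)

lemma moment_succ {a b : ℕ} (hab : a < b) (j n : ℕ) :
    ((j : ℝ) + 2) * moment a b (j + 2) n = -((n : ℝ) + 1) * moment a b (j + 1) n
      - (((a + b : ℕ) : ℝ) - j) * moment a b j (n + 2) := by
  obtain ⟨C, hC⟩ := esym_besselList_bound hab
  have i1 := (integrableOn_esym hab (j + 2) n).const_mul ((j : ℝ) + 2)
  have i2 := (integrableOn_esym hab j (n + 2)).const_mul (((a + b : ℕ) : ℝ) - j)
  have hfun : (fun t => (((j : ℝ) + 2) * esym (besselList a b) (j + 2) t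
      + t ^ 2 * (((a + b : ℕ) : ℝ) - j) * esym (besselList a b) j t) * t ^ n)
      = fun t => ((j : ℝ) + 2) * (esym (besselList a b) (j + 2) t * t ^ n)
        + (((a + b : ℕ) : ℝ) - j) * (esym (besselList a b) j t * t ^ (n + 2)) := by
    ext t; ring
  have key := integral_by_parts (g := fun t => ((j : ℝ) + 2) * esym (besselList a b) (j + 2) t
      + t ^ 2 * (((a + b : ℕ) : ℝ) - j) * esym (besselList a b) j t) (fun t ht => ?_)
    (hC (j + 1)) n (by rw [hfun]; exact Integrable.add i1 i2)
  · rw [hfun, integral_add i1 i2, integral_const_mul, integral_const_mul] at key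
    simp only [moment]
    linarith
  · have ht' : t ≠ 0 := ne_of_gt ht
    refine ((hasDerivAt_esym ht _ (besselList_deriv a b ht)).2 j).congr_deriv ?_
    rw [besselList_length]
    field_simp

lemma moment_last (a b n : ℕ) : moment a b (a + b + 1) n = 0 := by
  have : ∀ t, esym (besselList a b) (a + b + 1) t = 0 := fun t =>
    esym_eq_zero _ _ _ (by rw [besselList_length]; omega)
  simp [moment, this]

end BesselMoments

theorem bessel_moments_rank_le (k a : ℕ) (hk : 1 ≤ k) (ha : a ≤ (k - 1) / 2) :
    Module.rank ℚ ↥(Submodule.span ℚ (Set.range fun j : ℕ => IKM k a (2 * j)))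
      ≤ ((k + 1) / 2 : ℕ) := by
  obtain ⟨b, rfl⟩ : ∃ b, k = a + b := ⟨k - a, by omega⟩
  have hab : a < b := by omega
  have h := BesselMoments.rank_le_of_rec (BesselMoments.moment a b) (a + b)
    (BesselMoments.moment_one hab) (BesselMoments.moment_succ hab) (BesselMoments.moment_last a b)
  have e : (fun j : ℕ => IKM (a + b) a (2 * j)) = fun j => BesselMoments.moment a b 0 (2 * j) := by
    ext j
    rw [BesselMoments.moment_zero, IKM, Nat.add_sub_cancel_left]
  rw [e]
  exact h
end

section
/- Let k, a, b be nonnegative integers with a ≤ k. If either (i) 2a < k and b ≥ 0, or (ii) k is even, a = k/2 and 0 ≤ b < ⌊(k−1)/2⌋, then the function t ↦ I₀(t)^a K₀(t)^{k−a} t^b is Lebesgue integrable on the interval (0, ∞). -/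
/-! The integrand is dominated by an explicit integrable function on `(0, 1]` and on `(1, ∞)`.

Near `0`, `I₀` is bounded and `K₀` has only a logarithmic singularity; it suffices that
`K₀(t) ≤ C t^{-s}` for every `s ∈ (0, 1]` (`K0_le_rpow`), which for `s = 1 / (2 (k - a))` makes
the integrand `O(t^{-1/2})`.

At infinity, Gaussian comparison in the integral representations gives
`I₀(t) ≤ C e^t / √t` (`I0_le_gauss`) and `K₀(t) ≤ C e^{-t} / √t` (`K0_le_gauss`). If `2a < k` the
integrand is then `O(e^{-t} t^b)`; if `2a = k` it is `O(t^{b - a})`, and `b < (k - 1) / 2` forces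
`b - a ≤ -2`. -/

open MeasureTheory Real

lemma measurable_I0 : Measurable I0 := by
  unfold I0
  simp_rw [intervalIntegral.integral_of_le Real.pi_pos.le]
  refine Measurable.const_mul ?_ _
  have h : StronglyMeasurable (fun p : ℝ × ℝ => Real.exp (p.1 * Real.cos p.2)) :=
    Continuous.stronglyMeasurable (by fun_prop)
  exact (h.integral_prod_right' (ν := volume.restrict (Set.Ioc 0 π))).measurable

lemma measurable_K0 : Measurable K0 := by
  have h : StronglyMeasurable (fun p : ℝ × ℝ => Real.exp (-p.1 * Real.cosh p.2)) :=
    Continuous.stronglyMeasurable (by fun_prop)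
  exact (h.integral_prod_right' (ν := volume.restrict (Set.Ioi 0))).measurable

lemma I0_nonneg (t : ℝ) : 0 ≤ I0 t :=
  mul_nonneg (by positivity)
    (intervalIntegral.integral_nonneg Real.pi_pos.le fun _ _ => (Real.exp_pos _).le)

lemma K0_nonneg (t : ℝ) : 0 ≤ K0 t :=
  integral_nonneg fun _ => (Real.exp_pos _).le

lemma I0_le_exp {t : ℝ} (ht : 0 ≤ t) : I0 t ≤ Real.exp t := by
  have h : ∫ θ in (0:ℝ)..π, Real.exp (t * Real.cos θ) ≤ ∫ θ in (0:ℝ)..π, Real.exp t := by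
    refine intervalIntegral.integral_mono_on Real.pi_pos.le
      (Continuous.intervalIntegrable (by fun_prop) _ _) (by simp) fun θ _ => ?_
    exact Real.exp_le_exp.2 (mul_le_of_le_one_right ht (Real.cos_le_one θ))
  rw [intervalIntegral.integral_const, smul_eq_mul, sub_zero] at h
  unfold I0
  calc (1 / π) * ∫ θ in (0:ℝ)..π, Real.exp (t * Real.cos θ)
      ≤ (1 / π) * (π * Real.exp t) := by gcongr
    _ = Real.exp t := by field_simp

/-- The bound comes from `cos θ ≤ 1 - 2 θ² / π²` on `[0, π]`, which reduces the integral to a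
Gaussian one. -/
lemma I0_le_gauss : ∃ C, 0 ≤ C ∧ ∀ t, 0 < t → I0 t ≤ C * Real.exp t / √t := by
  refine ⟨(1 / π) * (√(π / (2 / π ^ 2)) / 2), by positivity, fun t ht => ?_⟩
  have hb : 0 < 2 / π ^ 2 * t := by positivity
  have hG := (integrable_exp_neg_mul_sq hb).const_mul (Real.exp t)
  have h1 : ∫ θ in (0:ℝ)..π, Real.exp (t * Real.cos θ)
      ≤ ∫ θ in Set.Ioc 0 π, Real.exp t * Real.exp (-(2 / π ^ 2 * t) * θ ^ 2) := by
    rw [intervalIntegral.integral_of_le Real.pi_pos.le]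
    refine setIntegral_mono_on ?_ hG.integrableOn measurableSet_Ioc fun θ hθ => ?_
    · rw [← intervalIntegrable_iff_integrableOn_Ioc_of_le Real.pi_pos.le]
      exact Continuous.intervalIntegrable (by fun_prop) _ _
    · rw [← Real.exp_add]
      refine Real.exp_le_exp.2 ?_
      have hc := Real.cos_le_one_sub_mul_cos_sq
        (x := θ) (by rw [abs_of_pos hθ.1]; exact hθ.2)
      nlinarith
  have h2 : ∫ θ in Set.Ioc 0 π, Real.exp t * Real.exp (-(2 / π ^ 2 * t) * θ ^ 2)
      ≤ ∫ θ in Set.Ioi 0, Real.exp t * Real.exp (-(2 / π ^ 2 * t) * θ ^ 2) :=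
    setIntegral_mono_set hG.integrableOn (ae_of_all _ fun _ => by positivity)
      (ae_of_all _ fun _ hx => hx.1)
  rw [integral_const_mul (μ := volume.restrict (Set.Ioi 0)), integral_gaussian_Ioi,
    ← div_div, Real.sqrt_div (by positivity) t] at h2
  unfold I0
  calc (1 / π) * ∫ θ in (0:ℝ)..π, Real.exp (t * Real.cos θ)
      ≤ (1 / π) * (Real.exp t * (√(π / (2 / π ^ 2)) / √t / 2)) := by
        gcongr; exact h1.trans h2
    _ = _ := by ring

lemma one_add_sq_half_le_cosh (u : ℝ) (hu : 0 ≤ u) : 1 + u ^ 2 / 2 ≤ Real.cosh u := by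
  have h1 : Real.cosh u = 1 + 2 * Real.sinh (u / 2) ^ 2 := by
    have := Real.cosh_two_mul (u / 2)
    have h2 := Real.cosh_sq (u / 2)
    rw [mul_div_cancel₀ u two_ne_zero] at this
    linarith
  have h2 : u / 2 ≤ Real.sinh (u / 2) := Real.self_le_sinh_iff.2 (by linarith)
  nlinarith

/-- The bound comes from `1 + u² / 2 ≤ cosh u`, which reduces the integral to a Gaussian one. -/
lemma K0_le_gauss : ∃ C, 0 ≤ C ∧ ∀ t, 0 < t → K0 t ≤ C * Real.exp (-t) / √t := by
  refine ⟨√(π / (1 / 2)) / 2, by positivity, fun t ht => ?_⟩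
  have hb : 0 < t * (1 / 2) := by positivity
  have hG := (integrable_exp_neg_mul_sq hb).const_mul (Real.exp (-t))
  have h1 : K0 t ≤ ∫ u in Set.Ioi 0, Real.exp (-t) * Real.exp (-(t * (1 / 2)) * u ^ 2) := by
    refine integral_mono_of_nonneg (ae_of_all _ fun _ => (Real.exp_pos _).le) hG.integrableOn ?_
    refine ae_restrict_of_forall_mem measurableSet_Ioi fun u hu => ?_
    simp only [← Real.exp_add]
    refine Real.exp_le_exp.2 ?_
    have := one_add_sq_half_le_cosh u (le_of_lt hu)
    nlinarith
  rw [integral_const_mul, integral_gaussian_Ioi, mul_comm t, ← div_div,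
    Real.sqrt_div (by positivity) t] at h1
  exact h1.trans_eq (by ring)

/-- `K₀` is dominated near `0` by arbitrarily small negative powers: `e^{-x} ≤ x^{-s}` and
`e^u / 2 ≤ cosh u` bound its integrand by `(t / 2)^{-s} e^{-s u}`. -/
lemma K0_le_rpow {s : ℝ} (hs : 0 < s) (hs1 : s ≤ 1) :
    ∃ C, 0 ≤ C ∧ ∀ t, 0 < t → K0 t ≤ C * t ^ (-s) := by
  refine ⟨(1 / 2) ^ (-s) * ∫ u in Set.Ioi (0:ℝ), Real.exp (-s * u),
    mul_nonneg (by positivity) (integral_nonneg fun _ => (Real.exp_pos _).le), fun t ht => ?_⟩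
  have hE := (integrableOn_exp_mul_Ioi (a := -s) (by linarith) 0).const_mul
    ((1 / 2) ^ (-s) * t ^ (-s))
  have h1 : K0 t ≤ ∫ u in Set.Ioi (0:ℝ), ((1 / 2) ^ (-s) * t ^ (-s)) * Real.exp (-s * u) := by
    refine integral_mono_of_nonneg (ae_of_all _ fun _ => (Real.exp_pos _).le) hE
      (ae_of_all _ fun u => ?_)
    have hx : 0 < t * Real.exp u / 2 := by positivity
    have hcosh : t * Real.exp u / 2 ≤ t * Real.cosh u := by
      rw [Real.cosh_eq]
      have := Real.exp_pos (-u)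
      nlinarith
    have hpow : (t * Real.exp u / 2) ^ s ≤ Real.exp (t * Real.cosh u) := by
      calc (t * Real.exp u / 2) ^ s ≤ (1 + t * Real.exp u / 2) ^ s :=
            Real.rpow_le_rpow hx.le (by linarith) hs.le
        _ ≤ (1 + t * Real.exp u / 2) ^ (1 : ℝ) :=
            Real.rpow_le_rpow_of_exponent_le (by linarith) hs1
        _ = t * Real.exp u / 2 + 1 := by rw [Real.rpow_one, add_comm]
        _ ≤ t * Real.cosh u + 1 := by linarith
        _ ≤ _ := Real.add_one_le_exp _
    calc Real.exp (-t * Real.cosh u) = (Real.exp (t * Real.cosh u))⁻¹ := by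
          rw [← Real.exp_neg, neg_mul]
      _ ≤ ((t * Real.exp u / 2) ^ s)⁻¹ := inv_anti₀ (by positivity) hpow
      _ = (1 / 2 * t * Real.exp u) ^ (-s) := by
          rw [← Real.rpow_neg hx.le]; congr 1; ring
      _ = (1 / 2) ^ (-s) * t ^ (-s) * Real.exp (-s * u) := by
          rw [Real.mul_rpow (by positivity) (by positivity),
            Real.mul_rpow (by positivity) (by positivity), ← Real.exp_mul, mul_comm u]
  rw [integral_const_mul] at h1
  exact h1.trans_eq (by ring)

theorem bessel_moment_integrable (k a b : ℕ) (hak : a ≤ k)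
    (h : 2 * a < k ∨ (2 * a = k ∧ b < (k - 1) / 2)) :
    MeasureTheory.IntegrableOn (fun t : ℝ => I0 t ^ a * K0 t ^ (k - a) * t ^ b)
      (Set.Ioi 0) := by
  have hmeas : Measurable (fun t : ℝ => I0 t ^ a * K0 t ^ (k - a) * t ^ b) :=
    ((measurable_I0.pow_const a).mul (measurable_K0.pow_const _)).mul (measurable_id.pow_const b)
  have hnorm : ∀ t : ℝ, 0 < t → ‖I0 t ^ a * K0 t ^ (k - a) * t ^ b‖
      = I0 t ^ a * K0 t ^ (k - a) * t ^ b := fun t ht =>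
    Real.norm_of_nonneg (mul_nonneg (mul_nonneg (pow_nonneg (I0_nonneg t) _)
      (pow_nonneg (K0_nonneg t) _)) (by positivity))
  obtain ⟨m, hm⟩ : ∃ m, k - a = m := ⟨_, rfl⟩
  have hm0 : 1 ≤ m := by omega
  rw [hm] at hmeas hnorm ⊢
  rw [← Set.Ioc_union_Ioi_eq_Ioi (zero_le_one (α := ℝ)), integrableOn_union]
  constructor
  · have hm0' : (1 : ℝ) ≤ m := by exact_mod_cast hm0
    obtain ⟨C, hC, hK⟩ := K0_le_rpow (s := 1 / (2 * m)) (by positivity)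
      (by rw [div_le_one (by positivity)]; linarith)
    have hg : IntegrableOn (fun t : ℝ => Real.exp 1 ^ a * C ^ m * t ^ (-(1 / 2) : ℝ))
        (Set.Ioc 0 1) := by
      refine Integrable.const_mul ?_ _
      rw [← IntegrableOn, ← intervalIntegrable_iff_integrableOn_Ioc_of_le zero_le_one]
      exact intervalIntegral.intervalIntegrable_rpow' (by norm_num)
    refine Integrable.mono' hg hmeas.aestronglyMeasurable
      (ae_restrict_of_forall_mem measurableSet_Ioc fun t ht => ?_)
    have ht0 := ht.1
    rw [hnorm t ht0]
    have hI : I0 t ≤ Real.exp 1 := (I0_le_exp ht0.le).trans (Real.exp_le_exp.2 ht.2)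
    have hp : (t ^ (-(1 / (2 * (m : ℝ))))) ^ m = t ^ (-(1 / 2) : ℝ) := by
      rw [← Real.rpow_mul_natCast ht0.le]
      congr 1
      field_simp
    calc I0 t ^ a * K0 t ^ m * t ^ b
        ≤ Real.exp 1 ^ a * (C * t ^ (-(1 / (2 * (m : ℝ))))) ^ m * 1 := by
          gcongr
          · exact pow_nonneg (K0_nonneg t) _
          · exact I0_nonneg t
          · exact K0_nonneg t
          · exact hK t ht0
          · exact pow_le_one₀ ht0.le ht.2
      _ = _ := by rw [mul_pow, hp]; ring
  · obtain ⟨C, hC, hK⟩ := K0_le_gauss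
    rcases h with h | ⟨h, hb⟩
    · have hg : IntegrableOn (fun t : ℝ => C ^ m * (Real.exp (-t) * t ^ ((b + 1 : ℝ) - 1)))
          (Set.Ioi 1) :=
        ((Real.GammaIntegral_convergent (s := b + 1) (by positivity)).mono_set
          (Set.Ioi_subset_Ioi zero_le_one)).const_mul _
      refine Integrable.mono' hg hmeas.aestronglyMeasurable
        (ae_restrict_of_forall_mem measurableSet_Ioi fun t ht => ?_)
      have ht1 : 1 < t := ht
      have ht0 : 0 < t := by linarith
      rw [hnorm t ht0]
      have hK' : K0 t ≤ C * Real.exp (-t) :=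
        (hK t ht0).trans (div_le_self (by positivity) (Real.one_le_sqrt.2 ht1.le))
      have he : Real.exp t ^ a * Real.exp (-t) ^ m ≤ Real.exp (-t) := by
        rw [← Real.exp_nat_mul, ← Real.exp_nat_mul, ← Real.exp_add]
        refine Real.exp_le_exp.2 ?_
        have : (a : ℝ) + 1 ≤ m := by exact_mod_cast (by omega : a + 1 ≤ m)
        nlinarith
      calc I0 t ^ a * K0 t ^ m * t ^ b
          ≤ Real.exp t ^ a * (C * Real.exp (-t)) ^ m * t ^ b := by
            have := I0_nonneg t
            have := K0_nonneg t
            gcongr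
            exact I0_le_exp ht0.le
        _ = C ^ m * ((Real.exp t ^ a * Real.exp (-t) ^ m) * t ^ b) := by rw [mul_pow]; ring
        _ ≤ C ^ m * (Real.exp (-t) * t ^ b) := by gcongr
        _ = _ := by rw [add_sub_cancel_right, Real.rpow_natCast]
    · obtain ⟨D, hD, hI⟩ := I0_le_gauss
      obtain rfl : a = m := by omega
      have hg : IntegrableOn (fun t : ℝ => (D * C) ^ a * t ^ (-2 : ℝ)) (Set.Ioi 1) :=
        (integrableOn_Ioi_rpow_of_lt (by norm_num) one_pos).const_mul _
      refine Integrable.mono' hg hmeas.aestronglyMeasurable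
        (ae_restrict_of_forall_mem measurableSet_Ioi fun t ht => ?_)
      have ht1 : 1 < t := ht
      have ht0 : 0 < t := by linarith
      rw [hnorm t ht0]
      have hIK : I0 t * K0 t ≤ D * C / t := by
        calc I0 t * K0 t ≤ (D * Real.exp t / √t) * (C * Real.exp (-t) / √t) :=
              mul_le_mul (hI t ht0) (hK t ht0) (K0_nonneg t) (by positivity)
          _ = D * C * (Real.exp t * Real.exp (-t)) / (√t * √t) := by ring
          _ = D * C / t := by rw [← Real.exp_add, Real.mul_self_sqrt ht0.le]; simp
      have hpow : t ^ b / t ^ a ≤ t ^ (-2 : ℝ) := by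
        rw [Real.rpow_neg ht0.le, div_le_iff₀ (by positivity), ← div_eq_inv_mul,
          le_div_iff₀ (by positivity)]
        norm_cast
        rw [← pow_add]
        exact pow_le_pow_right₀ ht1.le (by omega)
      calc I0 t ^ a * K0 t ^ a * t ^ b = (I0 t * K0 t) ^ a * t ^ b := by rw [mul_pow]
        _ ≤ (D * C / t) ^ a * t ^ b := by
            have := mul_nonneg (I0_nonneg t) (K0_nonneg t)
            gcongr
        _ = (D * C) ^ a * (t ^ b / t ^ a) := by rw [div_pow]; ring
        _ ≤ _ := by gcongr
end

section
/- The integral of the square of the modified Bessel function K₀ over the positive real line equals π²/4; that is, ∫₀^∞ K₀(t)² dt = π²/4. -/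
/-!
Evenness of `cosh` gives `K₀ t = (1/2) ∫_ℝ exp (-t cosh u) du`, so by Tonelli

`4 ∫₀^∞ K₀² = ∫_ℝ ∫_ℝ ∫₀^∞ exp (-t (cosh u + cosh v)) dt dv du = ∫_ℝ ∫_ℝ dv du / (cosh u + cosh v)`.

Substituting `v = w - u` and using `cosh u + cosh (w - u) = 2 cosh (w/2) cosh (u - w/2)`, the
double integral factors as `(∫ dw / (2 cosh (w/2))) (∫ du / cosh u) = π · π`. Both factors come
from the substitution `x = sinh (a w)` in `∫ dx / (1 + x²) = π` (`lintegral_div_cosh_mul`).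

The whole computation is carried out with `ℝ≥0∞`-valued integrals, so Tonelli applies without any
integrability check; finiteness of the inner integral for almost every `t` follows from finiteness
of the total.
-/

open MeasureTheory Real

/-- The substitution `y = sinh (a x)` in `∫ dy / (1 + y²) = π`. -/
lemma lintegral_div_cosh_mul {a : ℝ} (ha : 0 < a) :
    ∫⁻ x : ℝ, ENNReal.ofReal (a / cosh (a * x)) = ENNReal.ofReal π := by
  have himg : (fun x : ℝ => sinh (a * x)) '' Set.univ = Set.univ := by
    rw [Set.image_univ, Set.range_eq_univ]
    intro y
    obtain ⟨x, rfl⟩ := sinh_surjective y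
    exact ⟨x / a, by field_simp⟩
  have hder : ∀ x ∈ Set.univ,
      HasDerivWithinAt (fun x : ℝ => sinh (a * x)) (cosh (a * x) * a) Set.univ x := by
    intro x _
    have h : HasDerivAt (fun x : ℝ => a * x) a x := by
      simpa using (hasDerivAt_id x).const_mul a
    exact h.sinh.hasDerivWithinAt
  have hmono : MonotoneOn (fun x : ℝ => sinh (a * x)) Set.univ := by
    intro x _ y _ hxy
    exact sinh_le_sinh.2 (mul_le_mul_of_nonneg_left hxy ha.le)
  have key := lintegral_image_eq_lintegral_deriv_mul_of_monotoneOn MeasurableSet.univ hder hmono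
    (fun y => ENNReal.ofReal ((1 + y ^ 2)⁻¹))
  rw [himg, setLIntegral_univ, setLIntegral_univ,
    ← ofReal_integral_eq_lintegral_ofReal integrable_inv_one_add_sq
      (Filter.Eventually.of_forall fun x => by positivity), integral_univ_inv_one_add_sq] at key
  rw [key]
  refine lintegral_congr fun x => ?_
  have hc := cosh_pos (a * x)
  rw [← ENNReal.ofReal_mul (by positivity), add_comm 1, ← cosh_sq]
  congr 1
  field_simp

lemma lintegral_exp_neg_mul {c : ℝ} (hc : 0 < c) :
    ∫⁻ t in Set.Ioi (0:ℝ), ENNReal.ofReal (exp (-t * c)) = ENNReal.ofReal (1 / c) := by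
  have hcomm : ∀ t : ℝ, -t * c = -c * t := fun t => by ring
  simp_rw [hcomm]
  rw [← ofReal_integral_eq_lintegral_ofReal
    (integrableOn_exp_mul_Ioi (neg_lt_zero.2 hc) 0)
    (Filter.Eventually.of_forall fun x => (exp_pos _).le),
    integral_exp_mul_Ioi (neg_lt_zero.2 hc)]
  simp

lemma cosh_add_cosh_sub (u w : ℝ) :
    cosh u + cosh (w - u) = 2 * cosh (w / 2) * cosh (u - w / 2) := by
  obtain ⟨p, rfl⟩ : ∃ p, w = 2 * p := ⟨w / 2, by ring⟩
  obtain ⟨q, rfl⟩ : ∃ q, u = p + q := ⟨u - p, by ring⟩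
  have h1 : 2 * p - (p + q) = p - q := by ring
  have h2 : 2 * p / 2 = p := by ring
  rw [h1, h2, add_sub_cancel_left, cosh_add, cosh_sub]
  ring

lemma lintegral_inv_cosh_add_cosh :
    ∫⁻ u : ℝ, ∫⁻ v : ℝ, ENNReal.ofReal (1 / (cosh u + cosh v)) = ENNReal.ofReal (π ^ 2) := by
  have hshift : ∀ u : ℝ, ∫⁻ v : ℝ, ENNReal.ofReal (1 / (cosh u + cosh v))
      = ∫⁻ w : ℝ, ENNReal.ofReal ((1 / 2) / cosh (1 / 2 * w))
          * ENNReal.ofReal (1 / cosh (1 * (u - w / 2))) := by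
    intro u
    rw [← lintegral_sub_right_eq_self _ u]
    refine lintegral_congr fun w => ?_
    have h1 := cosh_pos (w / 2)
    have h2 := cosh_pos (u - w / 2)
    rw [cosh_add_cosh_sub, one_div_mul_eq_div, one_mul, ← ENNReal.ofReal_mul (by positivity)]
    congr 1
    field_simp
  simp_rw [hshift]
  rw [lintegral_lintegral_swap (by fun_prop)]
  have hinner : ∀ w : ℝ, ∫⁻ u : ℝ, ENNReal.ofReal ((1 / 2) / cosh (1 / 2 * w))
          * ENNReal.ofReal (1 / cosh (1 * (u - w / 2)))
      = ENNReal.ofReal ((1 / 2) / cosh (1 / 2 * w)) * ENNReal.ofReal π := by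
    intro w
    rw [lintegral_const_mul _ (by fun_prop),
      lintegral_sub_right_eq_self (fun u => ENNReal.ofReal (1 / cosh (1 * u))) (w / 2),
      lintegral_div_cosh_mul one_pos]
  simp_rw [hinner]
  rw [lintegral_mul_const _ (by fun_prop), lintegral_div_cosh_mul (by norm_num),
    ← ENNReal.ofReal_mul pi_pos.le, sq]

lemma K0_eq_toReal_lintegral (t : ℝ) :
    K0 t = (∫⁻ u : ℝ, ENNReal.ofReal (exp (-t * cosh u))).toReal / 2 := by
  have h := integral_comp_abs (f := fun u => exp (-t * cosh u))
  simp only [cosh_abs] at h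
  rw [← integral_eq_lintegral_of_nonneg_ae
    (Filter.Eventually.of_forall fun x => (exp_pos _).le) (by fun_prop), h, K0]
  ring

lemma lintegral_sq_lintegral_exp :
    ∫⁻ t in Set.Ioi (0:ℝ), (∫⁻ u : ℝ, ENNReal.ofReal (exp (-t * cosh u))) ^ 2
      = ENNReal.ofReal (π ^ 2) := by
  have hsq : ∀ t : ℝ, (∫⁻ u : ℝ, ENNReal.ofReal (exp (-t * cosh u))) ^ 2
      = ∫⁻ u : ℝ, ∫⁻ v : ℝ, ENNReal.ofReal (exp (-t * (cosh u + cosh v))) := by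
    intro t
    rw [sq, ← lintegral_mul_const _ (by fun_prop)]
    refine lintegral_congr fun u => ?_
    rw [← lintegral_const_mul _ (by fun_prop)]
    refine lintegral_congr fun v => ?_
    rw [← ENNReal.ofReal_mul (exp_pos _).le, ← exp_add, mul_add]
  simp_rw [hsq]
  rw [lintegral_lintegral_swap, ← lintegral_inv_cosh_add_cosh]
  · refine lintegral_congr fun u => ?_
    rw [lintegral_lintegral_swap (by fun_prop)]
    exact lintegral_congr fun v =>
      lintegral_exp_neg_mul (add_pos (cosh_pos u) (cosh_pos v))
  · refine Measurable.aemeasurable ?_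
    refine Measurable.lintegral_prod_right' (f := fun p : (ℝ × ℝ) × ℝ =>
      ENNReal.ofReal (exp (-p.1.1 * (cosh p.1.2 + cosh p.2)))) ?_
    fun_prop

theorem integral_K0_sq : ∫ t in Set.Ioi (0:ℝ), K0 t ^ 2 = π ^ 2 / 4 := by
  have hmeas : Measurable fun t : ℝ => (∫⁻ u : ℝ, ENNReal.ofReal (exp (-t * cosh u))) ^ 2 := by
    refine Measurable.pow_const ?_ 2
    refine Measurable.lintegral_prod_right' (f := fun p : ℝ × ℝ =>
      ENNReal.ofReal (exp (-p.1 * cosh p.2))) ?_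
    fun_prop
  have hK : ∀ t, K0 t ^ 2
      = ((∫⁻ u : ℝ, ENNReal.ofReal (exp (-t * cosh u))) ^ 2).toReal / 4 := by
    intro t
    rw [K0_eq_toReal_lintegral, ENNReal.toReal_pow]
    ring
  simp_rw [hK]
  rw [integral_div, integral_toReal hmeas.aemeasurable, lintegral_sq_lintegral_exp,
    ENNReal.toReal_ofReal (by positivity)]
  exact ae_lt_top hmeas (by rw [lintegral_sq_lintegral_exp]; exact ENNReal.ofReal_ne_top)
end

section
/- For each integer m ≥ 0 define polynomials λ_{n,m}(x) ∈ ℚ[x] by λ_{0,m} = 1, λ_{1,m} = x, and λ_{k+1,m} = x·λ_{k,m} − k(m+1−k)·λ_{k−1,m} for k ≥ 1. Then for every m ≥ 1 and every n ≥ 0, the polynomial identity λ_{n,m}(x−1) + λ_{n,m}(x+1) = 2·λ_{n,m−1}(x) holds in ℚ[x]. -/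
/-!
The exponential generating function `G_m = ∑ λ_{n,m}(x) zⁿ / n!` satisfies
`(1 - z²) ∂G_m/∂z = (x - m z) G_m`, so `G_m = (1 + z)^((m + x)/2) (1 - z)^((m - x)/2)`.
Hence `G_m(x ± 1) = (1 ± z) G_{m-1}(x)`, that is,
`λ_{n,m}(x ± 1) = λ_{n,m-1}(x) ± n λ_{n-1,m-1}(x)`. Adding the two identities gives the theorem.
The coefficient identity (`lam_succ_comp`) is checked directly from the recurrence by two-step
induction, treating both signs at once through a scalar `s` with `s² = 1`.
-/

/-- The polynomials `λ_{n,m}` defined by `λ_{0,m} = 1`, `λ_{1,m} = x` and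
`λ_{k+1,m} = x·λ_{k,m} - k(m+1-k)·λ_{k-1,m}` for `k ≥ 1`. -/
noncomputable def lam (m : ℕ) : ℕ → Polynomial ℚ
  | 0 => 1
  | 1 => Polynomial.X
  | (k + 2) =>
      Polynomial.X * lam m (k + 1) -
        Polynomial.C (((k : ℚ) + 1) * ((m : ℚ) + 1 - ((k : ℚ) + 1))) * lam m k

/-- Coefficient form of `G_{m+1}(x + s) = (1 + s z) G_m(x)` for a sign `s`. -/
theorem lam_succ_comp (m : ℕ) (s : ℚ) (hs : s * s = 1) (n : ℕ) :
    (lam (m + 1) (n + 1)).comp (Polynomial.X + Polynomial.C s) =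
      lam m (n + 1) + Polynomial.C (s * ((n : ℚ) + 1)) * lam m n := by
  have hC : (Polynomial.C s) * Polynomial.C s = 1 := by
    rw [← Polynomial.C_mul, hs, Polynomial.C_1]
  induction n using Nat.twoStepInduction with
  | zero => simp [lam]
  | one =>
    simp [lam]
    linear_combination hC
  | more n ih0 ih1 =>
    -- The recurrences on both sides; `e1` eliminates the lowest term `lam m n`.
    have e1 : lam m (n + 2) = Polynomial.X * lam m (n + 1) -
        Polynomial.C (((n : ℚ) + 1) * ((m : ℚ) + 1 - ((n : ℚ) + 1))) * lam m n := rfl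
    have e2 : lam m (n + 3) = Polynomial.X * lam m (n + 2) -
        Polynomial.C ((((n + 1 : ℕ) : ℚ) + 1) * ((m : ℚ) + 1 - (((n + 1 : ℕ) : ℚ) + 1))) *
          lam m (n + 1) := rfl
    have e3 : lam (m + 1) (n + 3) = Polynomial.X * lam (m + 1) (n + 2) -
        Polynomial.C ((((n + 1 : ℕ) : ℚ) + 1) *
          (((m + 1 : ℕ) : ℚ) + 1 - (((n + 1 : ℕ) : ℚ) + 1))) * lam (m + 1) (n + 1) := rfl
    change (lam (m + 1) (n + 3)).comp _ = lam m (n + 3) + _ * lam m (n + 2)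
    rw [e3, Polynomial.sub_comp, Polynomial.mul_comp, Polynomial.mul_comp, Polynomial.X_comp,
      Polynomial.C_comp, ih0, ih1, e2]
    simp only [Polynomial.C_mul, Polynomial.C_add, Polynomial.C_sub, Polynomial.C_1,
      Nat.cast_add, Nat.cast_one, Nat.cast_ofNat, Polynomial.C_ofNat] at e1 ⊢
    linear_combination (-Polynomial.C s * (Polynomial.C (n : ℚ) + 2)) * e1 +
      ((Polynomial.C (n : ℚ) + 2) * lam m (n + 1)) * hC

theorem lam_comp_shift (m : ℕ) (hm : 1 ≤ m) (n : ℕ) :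
    (lam m n).comp (Polynomial.X - 1) + (lam m n).comp (Polynomial.X + 1) =
      2 * lam (m - 1) n := by
  obtain ⟨m, rfl⟩ := Nat.exists_eq_add_of_le' hm
  cases n with
  | zero => simp [lam]; norm_num
  | succ n =>
    have h1 := lam_succ_comp m 1 (by norm_num) n
    have h2 := lam_succ_comp m (-1) (by norm_num) n
    rw [Polynomial.C_1] at h1
    rw [Polynomial.C_neg, Polynomial.C_1, ← sub_eq_add_neg] at h2
    rw [h1, h2, Nat.add_sub_cancel, neg_mul, Polynomial.C_neg, one_mul]
    ring
end

section
/- Let r ≥ 1 be an integer. Define functions f_1, …, f_{2r+1} on the interval (0,2) by f_i(x) = ∫₀^∞ I₀(xt) I₀(t)^{i−1} K₀(t)^{2r−i+1} dt for 1 ≤ i ≤ r, and f_i(x) = ∫₀^∞ K₀(xt) I₀(t)^{i−r−1} K₀(t)^{3r−i+1} dt for r < i ≤ 2r+1, and let ω_{2r+1}(x) be the Wronskian determinant det( (d/dx)^{l−1} f_i(x) )_{1 ≤ l, i ≤ 2r+1}. Then ω_{2r+1}(1) = (−1)^{r(r+1)/2} · det M_r · det M_{r+1}. -/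
/-!
Let `g` be `I₀` or `K₀`. Bessel's equation `g'' = g - g'/t` shows that, for a weight `W`, the
integrals `A_{2j}(x) = ∫ g(xt) t^{2j} W(t) dt` and `A_{2j+1}(x) = ∫ g'(xt) t^{2j+1} W(t) dt` satisfy
`A_m' = A_{m+1} - (m mod 2) A_m / x`. Hence the `l`-th derivative of `A_0` is `A_l` plus a
combination of `A_0, …, A_{l-1}` whose coefficients are polynomials in `1/x` independent of `g` and
`W`, and the Wronskian equals the determinant of the `A_l` (`det_iteratedDeriv`). Equivalently,
the derivatives are traded for the powers of `D² + D/x`, under which `g(xt)` is multiplied by `t²`.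

At `x = 1` the even rows consist of Bessel moments with `2r + 1` Bessel factors (`fam_I_even`,
`fam_K_even`), and in these rows the column of `f_i`, `i ≤ r`, agrees with that of `f_{r+i+1}`.
In the odd rows the difference of these two columns carries the factor
`t (I₀' K₀ - I₀ K₀') = 1` (`wronskian_I_K`), so it consists of moments with `2r - 1` Bessel factors
(`fam_odd_sub`). After subtracting the columns, the matrix with its odd rows collected first is
block triangular with diagonal blocks the transposes of `M_r` and `M_{r+1}`, and the row
permutation has `1 + 2 + ⋯ + r` inversions (`det_interleave`, `sign_shuffle`).

Differentiation under the integral sign rests on `|I₀|, |I₀'| ≤ e^t`, on the bound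
`K₀(t) = O(t^{-ε} e^{-(1-ε)t})` for every `ε > 0`, and on `-K₀'(t) ≤ e^{-t}/t + K₀(t)`. These
are organised by the growth classes `HasGrowth c`, which are stable under products.
-/

open MeasureTheory Real

/-- The matrix `M_r` with `(i,j)`-entry `IKM_{2r-1}(i-1, 2j-2)` for `1 ≤ i,j ≤ r`. -/
noncomputable def Mmat (r : ℕ) : Matrix (Fin r) (Fin r) ℝ :=
  Matrix.of fun i j => IKM (2 * r - 1) (i : ℕ) (2 * (j : ℕ))

/-- The functions `f_1, …, f_{2r+1}` (indexed by `Fin (2r+1)`, so index `i : Fin (2r+1)`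
corresponds to `f_{i+1}`):
`f_i(x) = ∫₀^∞ I₀(xt) I₀(t)^(i-1) K₀(t)^(2r-i+1) dt` for `1 ≤ i ≤ r` and
`f_i(x) = ∫₀^∞ K₀(xt) I₀(t)^(i-r-1) K₀(t)^(3r-i+1) dt` for `r < i ≤ 2r+1`. -/
noncomputable def f (r : ℕ) (i : Fin (2 * r + 1)) (x : ℝ) : ℝ :=
  if (i : ℕ) < r then
    ∫ t in Set.Ioi (0:ℝ), I0 (x * t) * I0 t ^ (i : ℕ) * K0 t ^ (2 * r - (i : ℕ))
  else
    ∫ t in Set.Ioi (0:ℝ), K0 (x * t) * I0 t ^ ((i : ℕ) - r) * K0 t ^ (3 * r - (i : ℕ))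

/-- The Wronskian `ω_{2r+1}(x) = det((d/dx)^(l-1) f_i(x))_{1 ≤ l,i ≤ 2r+1}`. -/
noncomputable def w (r : ℕ) (x : ℝ) : ℝ :=
  Matrix.det (Matrix.of fun l i : Fin (2 * r + 1) => iteratedDeriv (l : ℕ) (f r i) x)
/-! ### The Bessel functions `I₀`, `K₀`: derivatives, differential equations, Wronskian -/

/-- `(1/π) ∫₀^π cosⁿ θ · exp(t cos θ) dθ`, the `n`-th derivative of `I₀`. -/
noncomputable def cosMoment (n : ℕ) (t : ℝ) : ℝ :=
  (1 / π) * ∫ θ in (0:ℝ)..π, Real.cos θ ^ n * Real.exp (t * Real.cos θ)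

/-- `∫₀^∞ coshⁿ u · exp(-t cosh u) du`, which is `(-1)ⁿ` times the `n`-th derivative of `K₀`
on the positive half-line. -/
noncomputable def coshMoment (n : ℕ) (t : ℝ) : ℝ :=
  ∫ u in Set.Ioi (0:ℝ), Real.cosh u ^ n * Real.exp (-t * Real.cosh u)

lemma I0_eq (t : ℝ) : I0 t = cosMoment 0 t := by simp [I0, cosMoment]

lemma K0_eq (t : ℝ) : K0 t = coshMoment 0 t := by simp [K0, coshMoment]

lemma hasDerivAt_cosMoment (n : ℕ) (t : ℝ) :
    HasDerivAt (cosMoment n) (cosMoment (n + 1) t) t := by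
  unfold cosMoment
  refine HasDerivAt.const_mul _ ?_
  refine (intervalIntegral.hasDerivAt_integral_of_dominated_loc_of_deriv_le
    (F := fun x θ => Real.cos θ ^ n * Real.exp (x * Real.cos θ))
    (F' := fun x θ => Real.cos θ ^ (n + 1) * Real.exp (x * Real.cos θ))
    (bound := fun _ => Real.exp (|t| + 1)) (Metric.ball_mem_nhds t one_pos) ?_ ?_ ?_ ?_ ?_ ?_).2
  · exact Filter.Eventually.of_forall fun x =>
      (by fun_prop : Continuous fun θ => Real.cos θ ^ n * Real.exp (x * Real.cos θ)
        ).aestronglyMeasurable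
  · exact (by fun_prop : Continuous fun θ =>
      Real.cos θ ^ n * Real.exp (t * Real.cos θ)).intervalIntegrable _ _
  · exact (by fun_prop : Continuous fun θ =>
      Real.cos θ ^ (n + 1) * Real.exp (t * Real.cos θ)).aestronglyMeasurable
  · refine Filter.Eventually.of_forall fun θ _ x hx => ?_
    rw [Real.norm_eq_abs, abs_mul, abs_pow, Real.abs_exp]
    have h1 : |Real.cos θ| ^ (n + 1) ≤ 1 := pow_le_one₀ (abs_nonneg _) (Real.abs_cos_le_one θ)
    have hx' : |x| ≤ |t| + 1 := by
      have : |x - t| < 1 := by simpa [Real.dist_eq] using hx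
      have := abs_sub_abs_le_abs_sub x t
      linarith
    have h2 : x * Real.cos θ ≤ |t| + 1 := by
      calc x * Real.cos θ ≤ |x * Real.cos θ| := le_abs_self _
        _ = |x| * |Real.cos θ| := abs_mul _ _
        _ ≤ |x| * 1 := by gcongr; exact Real.abs_cos_le_one θ
        _ ≤ |t| + 1 := by linarith
    calc _ ≤ 1 * Real.exp (|t| + 1) := by gcongr
      _ = _ := one_mul _
  · exact intervalIntegrable_const
  · refine Filter.Eventually.of_forall fun θ _ x _ => ?_
    have h := ((hasDerivAt_id x).mul_const (Real.cos θ)).exp.const_mul (Real.cos θ ^ n)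
    refine h.congr_deriv ?_
    simp only [id]
    ring

lemma abs_cosMoment_le (n : ℕ) {t : ℝ} (ht : 0 ≤ t) : |cosMoment n t| ≤ Real.exp t := by
  have h : ‖∫ θ in (0:ℝ)..π, Real.cos θ ^ n * Real.exp (t * Real.cos θ)‖
      ≤ Real.exp t * |π - 0| := by
    refine intervalIntegral.norm_integral_le_of_norm_le_const fun θ _ => ?_
    rw [Real.norm_eq_abs, abs_mul, abs_pow, Real.abs_exp]
    have h1 : |Real.cos θ| ^ n ≤ 1 := pow_le_one₀ (abs_nonneg _) (Real.abs_cos_le_one θ)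
    have h2 : t * Real.cos θ ≤ t := by nlinarith [Real.cos_le_one θ]
    calc _ ≤ 1 * Real.exp t := by gcongr
      _ = _ := one_mul _
  rw [sub_zero, abs_of_pos Real.pi_pos, Real.norm_eq_abs] at h
  rw [cosMoment, abs_mul, abs_of_pos (by positivity)]
  calc _ ≤ 1 / π * (Real.exp t * π) := by gcongr
    _ = Real.exp t := by field_simp

/-- Bessel's equation for `I₀`, from `d/dθ (sin θ e^{t cos θ})`. -/
lemma cosMoment_ode (t : ℝ) :
    t * cosMoment 2 t + cosMoment 1 t = t * cosMoment 0 t := by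
  have h : ∫ θ in (0:ℝ)..π, (Real.cos θ * Real.exp (t * Real.cos θ)
      - t * Real.sin θ ^ 2 * Real.exp (t * Real.cos θ)) = 0 := by
    rw [intervalIntegral.integral_eq_sub_of_hasDerivAt
      (f := fun θ => Real.sin θ * Real.exp (t * Real.cos θ))]
    · simp
    · intro θ _
      refine ((Real.hasDerivAt_sin θ).mul ((Real.hasDerivAt_cos θ).const_mul t).exp).congr_deriv ?_
      ring
    · exact (by fun_prop : Continuous _).intervalIntegrable _ _
  have hi : ∀ n, IntervalIntegrable (fun θ => Real.cos θ ^ n * Real.exp (t * Real.cos θ))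
      volume 0 π := fun n => (by fun_prop : Continuous _).intervalIntegrable _ _
  have h' : (∫ θ in (0:ℝ)..π, Real.cos θ ^ 1 * Real.exp (t * Real.cos θ))
      + t * (∫ θ in (0:ℝ)..π, Real.cos θ ^ 2 * Real.exp (t * Real.cos θ))
      - t * (∫ θ in (0:ℝ)..π, Real.cos θ ^ 0 * Real.exp (t * Real.cos θ)) = 0 := by
    rw [← intervalIntegral.integral_const_mul, ← intervalIntegral.integral_const_mul,
      ← intervalIntegral.integral_add (hi 1) ((hi 2).const_mul t),
      ← intervalIntegral.integral_sub ((hi 1).add ((hi 2).const_mul t)) ((hi 0).const_mul t)]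
    refine Eq.trans ?_ h
    refine intervalIntegral.integral_congr fun θ _ => ?_
    simp only [Real.sin_sq]
    ring
  unfold cosMoment
  linear_combination (1 / π) * h'

lemma exp_le_two_cosh (u : ℝ) : Real.exp u ≤ 2 * Real.cosh u := by
  rw [Real.cosh_eq]; linarith [Real.exp_pos (-u)]

/-- `coshⁿ u · exp(-a cosh u) = O(e^{-u})`. -/
lemma cosh_pow_mul_exp_le (n : ℕ) {a : ℝ} (ha : 0 < a) (u : ℝ) :
    Real.cosh u ^ n * Real.exp (-a * Real.cosh u)
      ≤ 2 * (n + 1).factorial / a ^ (n + 1) * Real.exp (-1 * u) := by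
  have hc : 0 < Real.cosh u := Real.cosh_pos u
  have h1 := Real.pow_div_factorial_le_exp (a * Real.cosh u) (by positivity) (n + 1)
  have h2 := exp_le_two_cosh u
  rw [div_le_iff₀ (by positivity), mul_pow] at h1
  have hE := Real.exp_pos (a * Real.cosh u)
  have hF := Real.exp_pos u
  rw [neg_mul, neg_mul, one_mul, Real.exp_neg, Real.exp_neg, ← div_eq_mul_inv, ← div_eq_mul_inv,
    div_div, div_le_div_iff₀ (by positivity) (by positivity)]
  calc Real.cosh u ^ n * (a ^ (n + 1) * Real.exp u)
      ≤ Real.cosh u ^ n * (a ^ (n + 1) * (2 * Real.cosh u)) := by gcongr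
    _ = 2 * (a ^ (n + 1) * Real.cosh u ^ (n + 1)) := by ring
    _ ≤ 2 * (Real.exp (a * Real.cosh u) * (n + 1).factorial) := by gcongr
    _ = _ := by ring

lemma integrableOn_coshMoment (n : ℕ) {t : ℝ} (ht : 0 < t) :
    IntegrableOn (fun u => Real.cosh u ^ n * Real.exp (-t * Real.cosh u)) (Set.Ioi 0) := by
  refine ((exp_neg_integrableOn_Ioi 0 one_pos).const_mul
    (2 * (n + 1).factorial / t ^ (n + 1))).mono' ?_ ?_
  · exact (by fun_prop : Continuous _).aestronglyMeasurable
  · refine Filter.Eventually.of_forall fun u => ?_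
    have hc : 0 < Real.cosh u := Real.cosh_pos u
    rw [Real.norm_of_nonneg (by positivity)]
    exact cosh_pow_mul_exp_le n ht u

lemma hasDerivAt_coshMoment (n : ℕ) {t : ℝ} (ht : 0 < t) :
    HasDerivAt (coshMoment n) (-coshMoment (n + 1) t) t := by
  unfold coshMoment
  rw [← integral_neg]
  refine (hasDerivAt_integral_of_dominated_loc_of_deriv_le
    (F := fun x u => Real.cosh u ^ n * Real.exp (-x * Real.cosh u))
    (F' := fun x u => -(Real.cosh u ^ (n + 1) * Real.exp (-x * Real.cosh u)))
    (bound := fun u => Real.cosh u ^ (n + 1) * Real.exp (-(t / 2) * Real.cosh u))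
    (Ioi_mem_nhds (half_lt_self ht)) ?_ ?_ ?_ ?_ ?_ ?_).2
  · exact Filter.Eventually.of_forall fun x => (by fun_prop : Continuous _).aestronglyMeasurable
  · exact integrableOn_coshMoment n ht
  · exact (by fun_prop : Continuous _).aestronglyMeasurable
  · refine Filter.Eventually.of_forall fun u x hx => ?_
    have hc : 0 < Real.cosh u := Real.cosh_pos u
    rw [norm_neg, Real.norm_of_nonneg (by positivity)]
    have hx' : t / 2 ≤ x := le_of_lt hx
    gcongr
  · exact integrableOn_coshMoment (n + 1) (half_pos ht)
  · refine Filter.Eventually.of_forall fun u x _ => ?_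
    have h := ((hasDerivAt_neg x).mul_const (Real.cosh u)).exp.const_mul (Real.cosh u ^ n)
    refine h.congr_deriv ?_
    ring

lemma coshMoment_nonneg (n : ℕ) (t : ℝ) : 0 ≤ coshMoment n t :=
  integral_nonneg fun u => by have := Real.cosh_pos u; positivity

lemma sinh_le_cosh (u : ℝ) : Real.sinh u ≤ Real.cosh u := by
  rw [Real.cosh_eq, Real.sinh_eq]; linarith [Real.exp_pos (-u)]

lemma cosh_le_sinh_add_one {u : ℝ} (hu : 0 ≤ u) : Real.cosh u ≤ Real.sinh u + 1 := by
  have := Real.cosh_sub_sinh u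
  have : Real.exp (-u) ≤ 1 := by simpa using hu
  linarith

lemma tendsto_sinh_atTop : Filter.Tendsto Real.sinh Filter.atTop Filter.atTop := 
  Real.sinhOrderIso.tendsto_atTop

lemma tendsto_cosh_atTop : Filter.Tendsto Real.cosh Filter.atTop Filter.atTop := 
  Filter.tendsto_atTop_mono sinh_le_cosh tendsto_sinh_atTop

/-- Bessel's equation for `K₀`, from `d/du (sinh u e^{-t cosh u})`. -/
lemma coshMoment_ode {t : ℝ} (ht : 0 < t) :
    t * coshMoment 2 t - coshMoment 1 t = t * coshMoment 0 t := by
  have hi : ∀ n, IntegrableOn (fun u => Real.cosh u ^ n * Real.exp (-t * Real.cosh u))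
      (Set.Ioi 0) := fun n => integrableOn_coshMoment n ht
  have hsub : IntegrableOn (fun u => Real.cosh u ^ 1 * Real.exp (-t * Real.cosh u)
      - t * (Real.cosh u ^ 2 * Real.exp (-t * Real.cosh u))) (Set.Ioi 0) :=
    (hi 1).sub ((hi 2).const_mul t)
  have hJ : IntegrableOn (fun u => Real.cosh u ^ 1 * Real.exp (-t * Real.cosh u)
      - t * (Real.cosh u ^ 2 * Real.exp (-t * Real.cosh u))
      + t * (Real.cosh u ^ 0 * Real.exp (-t * Real.cosh u))) (Set.Ioi 0) :=
    hsub.add ((hi 0).const_mul t)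
  have hlim : Filter.Tendsto (fun u => Real.sinh u * Real.exp (-t * Real.cosh u))
      Filter.atTop (nhds 0) := by
    have h0 : Filter.Tendsto (fun u : ℝ => 2 * (1 + 1).factorial / t ^ (1 + 1) * Real.exp (-1 * u))
        Filter.atTop (nhds 0) := by
      have := (Real.tendsto_exp_neg_atTop_nhds_zero).const_mul
        (2 * ((1 + 1).factorial : ℝ) / t ^ (1 + 1))
      simpa using this
    refine squeeze_zero' ?_ ?_ h0
    · filter_upwards [Filter.eventually_ge_atTop 0] with u hu
      have := Real.sinh_nonneg_iff.2 hu
      positivity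
    · refine Filter.Eventually.of_forall fun u => ?_
      refine le_trans ?_ (cosh_pow_mul_exp_le 1 ht u)
      rw [pow_one]
      gcongr
      exact sinh_le_cosh u
  have h := integral_Ioi_of_hasDerivAt_of_tendsto
    (f := fun u => Real.sinh u * Real.exp (-t * Real.cosh u)) (a := 0)
    (by fun_prop : Continuous _).continuousWithinAt
    (fun u _ => by
      refine ((Real.hasDerivAt_sinh u).mul
        ((Real.hasDerivAt_cosh u).const_mul (-t)).exp).congr_deriv ?_
      have : Real.cosh u ^ 2 = Real.sinh u ^ 2 + 1 := Real.cosh_sq u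
      linear_combination (t * Real.exp (-t * Real.cosh u)) * this) hJ hlim
  rw [integral_add hsub ((hi 0).const_mul t),
    integral_sub (hi 1) ((hi 2).const_mul t), integral_const_mul, integral_const_mul] at h
  simp only [Real.sinh_zero, zero_mul, sub_zero] at h
  unfold coshMoment
  linarith

/-- `∫₀^∞ cosh u e^{-t sinh u} du = 1/t`, with integrability. -/
lemma integral_cosh_exp_sinh {t : ℝ} (ht : 0 < t) :
    IntegrableOn (fun u => Real.cosh u * Real.exp (-t * Real.sinh u)) (Set.Ioi 0) ∧
    ∫ u in Set.Ioi (0:ℝ), Real.cosh u * Real.exp (-t * Real.sinh u) = 1 / t := by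
  have hd : ∀ u ∈ Set.Ici (0:ℝ), HasDerivAt (fun u => -(1 / t) * Real.exp (-t * Real.sinh u))
      (Real.cosh u * Real.exp (-t * Real.sinh u)) u := fun u _ => by
    refine (((Real.hasDerivAt_sinh u).const_mul (-t)).exp.const_mul (-(1 / t))).congr_deriv ?_
    field_simp
  have hp : ∀ u ∈ Set.Ioi (0:ℝ), 0 ≤ Real.cosh u * Real.exp (-t * Real.sinh u) := fun u _ => by
    have := Real.cosh_pos u; positivity
  have hl : Filter.Tendsto (fun u => -(1 / t) * Real.exp (-t * Real.sinh u)) Filter.atTop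
      (nhds 0) := by
    have h1 : Filter.Tendsto (fun u => -t * Real.sinh u) Filter.atTop Filter.atBot :=
      tendsto_sinh_atTop.const_mul_atTop_of_neg (by linarith)
    simpa using (Real.tendsto_exp_atBot.comp h1).const_mul (-(1 / t))
  refine ⟨integrableOn_Ioi_deriv_of_nonneg' hd hp hl, ?_⟩
  rw [integral_Ioi_of_hasDerivAt_of_nonneg' hd hp hl]
  simp

lemma coshMoment_one_le {t : ℝ} (ht : 0 < t) : coshMoment 1 t ≤ 1 / t := by
  rw [← (integral_cosh_exp_sinh ht).2]
  refine setIntegral_mono (integrableOn_coshMoment 1 ht) (integral_cosh_exp_sinh ht).1 fun u => ?_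
  have := Real.cosh_pos u
  simp only [pow_one]
  gcongr ?_ * Real.exp ?_
  nlinarith [sinh_le_cosh u]

lemma le_coshMoment_one {t : ℝ} (ht : 0 < t) : Real.exp (-t) * (1 / t) ≤ coshMoment 1 t := by
  rw [← (integral_cosh_exp_sinh ht).2, ← integral_const_mul]
  refine setIntegral_mono_on ((integral_cosh_exp_sinh ht).1.const_mul _)
    (integrableOn_coshMoment 1 ht) measurableSet_Ioi fun u hu => ?_
  have := Real.cosh_pos u
  have h := cosh_le_sinh_add_one (le_of_lt hu)
  rw [pow_one, mul_left_comm, ← Real.exp_add]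
  gcongr
  nlinarith

/-- `K₁(t) ≤ e^{-t}/t + K₀(t)`, from `cosh u ≤ sinh u + 1`. -/
lemma coshMoment_one_le' {t : ℝ} (ht : 0 < t) :
    coshMoment 1 t ≤ Real.exp (-t) / t + coshMoment 0 t := by
  have hd : ∀ u ∈ Set.Ici (0:ℝ), HasDerivAt (fun u => -(1 / t) * Real.exp (-t * Real.cosh u))
      (Real.sinh u * Real.exp (-t * Real.cosh u)) u := fun u _ => by
    refine (((Real.hasDerivAt_cosh u).const_mul (-t)).exp.const_mul (-(1 / t))).congr_deriv ?_
    field_simp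
  have hp : ∀ u ∈ Set.Ioi (0:ℝ), 0 ≤ Real.sinh u * Real.exp (-t * Real.cosh u) := fun u hu => by
    have := Real.sinh_nonneg_iff.2 (le_of_lt hu); positivity
  have hl : Filter.Tendsto (fun u => -(1 / t) * Real.exp (-t * Real.cosh u)) Filter.atTop
      (nhds 0) := by
    have h1 : Filter.Tendsto (fun u => -t * Real.cosh u) Filter.atTop Filter.atBot :=
      tendsto_cosh_atTop.const_mul_atTop_of_neg (by linarith)
    simpa using (Real.tendsto_exp_atBot.comp h1).const_mul (-(1 / t))
  have hi := integrableOn_Ioi_deriv_of_nonneg' hd hp hl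
  have he := integral_Ioi_of_hasDerivAt_of_nonneg' hd hp hl
  have h : Real.exp (-t) / t = ∫ u in Set.Ioi (0:ℝ), Real.sinh u * Real.exp (-t * Real.cosh u) := by
    rw [he]; simp; ring
  rw [h, coshMoment, coshMoment, ← integral_add hi (integrableOn_coshMoment 0 ht)]
  refine setIntegral_mono_on (integrableOn_coshMoment 1 ht) (hi.add (integrableOn_coshMoment 0 ht))
    measurableSet_Ioi fun u hu => ?_
  have h := cosh_le_sinh_add_one (le_of_lt hu)
  rw [pow_one, pow_zero, ← add_mul]
  gcongr

lemma coshMoment_zero_le_one {t : ℝ} (ht : 0 < t) : coshMoment 0 t ≤ coshMoment 1 t := by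
  refine setIntegral_mono (integrableOn_coshMoment 0 ht) (integrableOn_coshMoment 1 ht) fun u => ?_
  have := Real.one_le_cosh u
  simp only [pow_one, pow_zero]
  gcongr

lemma coshMoment_antitone (n : ℕ) {s t : ℝ} (hs : 0 < s) (hst : s ≤ t) :
    coshMoment n t ≤ coshMoment n s := by
  refine setIntegral_mono (integrableOn_coshMoment n (hs.trans_le hst))
    (integrableOn_coshMoment n hs) fun u => ?_
  have := Real.cosh_pos u
  simp only
  gcongr

/-- The Wronskian of `I₀` and `K₀` is `1/t`: the product of `t` with it is constant by Bessel's
equation, and it tends to `1` at the origin because `t K₁(t) → 1` there. -/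
lemma wronskian_I_K {t : ℝ} (ht : 0 < t) :
    t * (cosMoment 1 t * coshMoment 0 t + cosMoment 0 t * coshMoment 1 t) = 1 := by
  set W : ℝ → ℝ := fun t => t * (cosMoment 1 t * coshMoment 0 t + cosMoment 0 t * coshMoment 1 t)
    with hW
  have hder : ∀ s ∈ Set.Ioi (0:ℝ), HasDerivAt W 0 s := fun s hs => by
    have h := (hasDerivAt_id s).mul
      (((hasDerivAt_cosMoment 1 s).mul (hasDerivAt_coshMoment 0 hs)).add
      ((hasDerivAt_cosMoment 0 s).mul (hasDerivAt_coshMoment 1 hs)))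
    refine h.congr_deriv ?_
    have h1 := cosMoment_ode s
    have h2 := coshMoment_ode hs
    simp only [id, zero_add, one_add_one_eq_two, Pi.add_apply, Pi.mul_apply]
    linear_combination coshMoment 0 s * h1 - cosMoment 0 s * h2
  obtain ⟨c, hc⟩ := isOpen_Ioi.exists_is_const_of_deriv_eq_zero isPreconnected_Ioi
    (fun s hs => (hder s hs).differentiableAt.differentiableWithinAt)
    (fun s hs => (hder s hs).deriv)
  have hlim : Filter.Tendsto W (nhdsWithin 0 (Set.Ioi 0)) (nhds 1) := by
    have hcont : ∀ n, Filter.Tendsto (cosMoment n) (nhdsWithin 0 (Set.Ioi 0))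
        (nhds (cosMoment n 0)) := fun n =>
      ((hasDerivAt_cosMoment n 0).continuousAt.tendsto).mono_left nhdsWithin_le_nhds
    have hI0 : cosMoment 0 0 = 1 := by simp [cosMoment]
    have hI1 : cosMoment 1 0 = 0 := by simp [cosMoment]
    have hexp : Filter.Tendsto (fun s : ℝ => Real.exp (-s)) (nhdsWithin 0 (Set.Ioi 0))
        (nhds 1) := by
      have : ContinuousAt (fun s : ℝ => Real.exp (-s)) 0 := by fun_prop
      simpa using this.tendsto.mono_left nhdsWithin_le_nhds
    have hK1 : Filter.Tendsto (fun s => s * coshMoment 1 s) (nhdsWithin 0 (Set.Ioi 0))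
        (nhds 1) := by
      refine tendsto_of_tendsto_of_tendsto_of_le_of_le' hexp tendsto_const_nhds ?_ ?_
      · filter_upwards [self_mem_nhdsWithin] with s hs
        have hs' : 0 < s := hs
        have := mul_le_mul_of_nonneg_left (le_coshMoment_one hs) hs'.le
        refine le_trans (le_of_eq ?_) this
        field_simp
      · filter_upwards [self_mem_nhdsWithin] with s hs
        have hs' : 0 < s := hs
        have := mul_le_mul_of_nonneg_left (coshMoment_one_le hs) hs'.le
        refine le_trans this (le_of_eq ?_)
        field_simp
    have hz : Filter.Tendsto (fun s => cosMoment 1 s * (s * coshMoment 0 s))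
        (nhdsWithin 0 (Set.Ioi 0)) (nhds 0) := by
      refine squeeze_zero_norm' (a := fun s => |cosMoment 1 s|) ?_ ?_
      · filter_upwards [self_mem_nhdsWithin] with s hs
        have hs' : 0 < s := hs
        have h0 := coshMoment_nonneg 0 s
        have h1 : s * coshMoment 0 s ≤ 1 := by
          have := mul_le_mul_of_nonneg_left ((coshMoment_zero_le_one hs).trans
            (coshMoment_one_le hs)) hs'.le
          refine le_trans this (le_of_eq ?_)
          field_simp
        rw [Real.norm_eq_abs, abs_mul, abs_of_nonneg (mul_nonneg hs'.le h0)]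
        exact mul_le_of_le_one_right (abs_nonneg _) h1
      · simpa [hI1] using (hcont 1).abs
    have := hz.add ((hcont 0).mul hK1)
    rw [hI0, zero_add, one_mul] at this
    refine this.congr fun s => ?_
    simp only [hW]; ring
  have hc1 : c = 1 := by
    refine tendsto_nhds_unique (tendsto_const_nhds.congr' ?_) hlim
    filter_upwards [self_mem_nhdsWithin] with s hs
    exact (hc s hs).symm
  rw [← hc1]
  exact hc t ht

/-! ### Growth on the positive half-line -/

/-- `F` grows at most like `e^{ct}` on `(0, ∞)`, up to a factor `e^{εt}` at infinity and
`t^{-ε}` at the origin with `ε > 0` arbitrarily small. The class is closed under products (with `c`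
additive), absorbs polynomial factors and logarithmic singularities at `0`, and consists
of integrable functions when `c < 0`. -/
def HasGrowth (c : ℝ) (F : ℝ → ℝ) : Prop :=
  ∀ ε : ℝ, 0 < ε → ε ≤ 1 → ∃ C : ℝ, ∀ t : ℝ, 0 < t →
    |F t| ≤ C * (t ^ (-ε) * Real.exp ((c + ε) * t))

namespace HasGrowth

variable {c d : ℝ} {F G : ℝ → ℝ}

lemma mul (hF : HasGrowth c F) (hG : HasGrowth d G) :
    HasGrowth (c + d) (fun t => F t * G t) := by
  intro ε h0 h1
  obtain ⟨C, hC⟩ := hF (ε / 2) (by linarith) (by linarith)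
  obtain ⟨D, hD⟩ := hG (ε / 2) (by linarith) (by linarith)
  refine ⟨C * D, fun t ht => ?_⟩
  rw [abs_mul]
  refine (mul_le_mul (hC t ht) (hD t ht) (abs_nonneg _)
    ((abs_nonneg _).trans (hC t ht))).trans (le_of_eq ?_)
  have e1 : t ^ (-ε) = t ^ (-(ε / 2)) * t ^ (-(ε / 2)) := by
    rw [← Real.rpow_add ht]; congr 1; ring
  have e2 : Real.exp ((c + d + ε) * t)
      = Real.exp ((c + ε / 2) * t) * Real.exp ((d + ε / 2) * t) := by
    rw [← Real.exp_add]; congr 1; ring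
  rw [e1, e2]; ring

lemma add (hF : HasGrowth c F) (hG : HasGrowth c G) : HasGrowth c (fun t => F t + G t) := by
  intro ε h0 h1
  obtain ⟨C, hC⟩ := hF ε h0 h1
  obtain ⟨D, hD⟩ := hG ε h0 h1
  refine ⟨C + D, fun t ht => (abs_add_le _ _).trans ?_⟩
  rw [add_mul]
  exact add_le_add (hC t ht) (hD t ht)

lemma mono (hF : HasGrowth c F) (h : ∀ t, 0 < t → |G t| ≤ |F t|) : HasGrowth c G := by
  intro ε h0 h1
  obtain ⟨C, hC⟩ := hF ε h0 h1
  exact ⟨C, fun t ht => (h t ht).trans (hC t ht)⟩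

lemma mono_exp (hF : HasGrowth c F) (hcd : c ≤ d) : HasGrowth d F := by
  intro ε h0 h1
  obtain ⟨C, hC⟩ := hF ε h0 h1
  refine ⟨|C|, fun t ht => (hC t ht).trans ?_⟩
  gcongr
  exact le_abs_self C

lemma one : HasGrowth 0 (fun _ => 1) := by
  intro ε h0 h1
  refine ⟨1, fun t ht => ?_⟩
  rw [abs_one, one_mul, zero_add, Real.rpow_neg ht.le, ← div_eq_inv_mul,
    le_div_iff₀ (by positivity), one_mul, mul_comm ε t, Real.exp_mul]
  gcongr
  linarith [Real.add_one_le_exp t]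

lemma id : HasGrowth 0 (fun t => t) := by
  intro ε h0 h1
  refine ⟨((1 + ε) / ε) ^ (1 + ε), fun t ht => ?_⟩
  -- `s ^ (1 + ε) ≤ exp ((1 + ε) s)` at `s = ε t / (1 + ε)`
  have h2 : (ε * t / (1 + ε)) ^ (1 + ε) ≤ Real.exp (ε * t) := by
    have : Real.exp (ε * t) = Real.exp (ε * t / (1 + ε)) ^ (1 + ε) := by
      rw [← Real.exp_mul]; congr 1; field_simp
    rw [this]
    gcongr
    linarith [Real.add_one_le_exp (ε * t / (1 + ε))]
  have h3 : t ^ (1 + ε) = ((1 + ε) / ε) ^ (1 + ε) * (ε * t / (1 + ε)) ^ (1 + ε) := by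
    rw [← Real.mul_rpow (by positivity) (by positivity)]; congr 1; field_simp
  have h4 : t = t ^ (-ε) * t ^ (1 + ε) := by
    rw [← Real.rpow_add ht]; simp
  rw [abs_of_pos ht, zero_add]
  calc t = t ^ (-ε) * (((1 + ε) / ε) ^ (1 + ε) * (ε * t / (1 + ε)) ^ (1 + ε)) := by
        rw [← h3]; exact h4
    _ ≤ t ^ (-ε) * (((1 + ε) / ε) ^ (1 + ε) * Real.exp (ε * t)) := by gcongr
    _ = _ := by ring

lemma exp (c : ℝ) : HasGrowth c (fun t => Real.exp (c * t)) := by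
  intro ε h0 h1
  obtain ⟨C, hC⟩ := one ε h0 h1
  refine ⟨C, fun t ht => ?_⟩
  have := mul_le_mul_of_nonneg_left (hC t ht) (Real.exp_pos (c * t)).le
  rw [abs_one, mul_one, zero_add] at this
  rw [Real.abs_exp, add_mul, Real.exp_add]
  linarith

lemma const_mul (hF : HasGrowth c F) (k : ℝ) : HasGrowth c (fun t => k * F t) := by
  intro ε h0 h1
  obtain ⟨C, hC⟩ := hF ε h0 h1
  refine ⟨|k| * C, fun t ht => ?_⟩
  rw [abs_mul, mul_assoc]
  exact mul_le_mul_of_nonneg_left (hC t ht) (abs_nonneg k)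

lemma pow (hF : HasGrowth c F) (n : ℕ) : HasGrowth (n * c) (fun t => F t ^ n) := by
  induction n with
  | zero => simpa using one
  | succ n ih =>
    have := ih.mul hF
    simp only [pow_succ]
    convert this using 1
    push_cast; ring

lemma integrableOn (hF : HasGrowth c F) (hc : c < 0) (hcont : ContinuousOn F (Set.Ioi 0)) :
    IntegrableOn F (Set.Ioi 0) := by
  set ε := min (1 / 2) (-c / 2) with hε
  have h0 : 0 < ε := lt_min (by norm_num) (by linarith)
  have h1 : ε ≤ 1 / 2 := min_le_left _ _
  have h2 : ε ≤ -c / 2 := min_le_right _ _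
  obtain ⟨C, hC⟩ := hF ε h0 (by linarith)
  have hi := (integrableOn_rpow_mul_exp_neg_mul_rpow (p := 1) (s := -ε) (b := -(c + ε))
    (by linarith) one_pos (by linarith)).const_mul C
  refine hi.mono' (hcont.aestronglyMeasurable measurableSet_Ioi) ?_
  refine (ae_restrict_mem measurableSet_Ioi).mono fun t ht => ?_
  rw [Real.norm_eq_abs, Real.rpow_one, neg_neg]
  exact hC t ht

end HasGrowth

lemma exp_neg_le_rpow {y ε : ℝ} (hy : 0 < y) (hε : 0 < ε) : Real.exp (-(ε * y)) ≤ y ^ (-ε) := by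
  rw [Real.rpow_neg hy.le, Real.exp_neg, mul_comm, Real.exp_mul]
  gcongr
  linarith [Real.add_one_le_exp y]

lemma HasGrowth.comp_mul {c : ℝ} {F : ℝ → ℝ} (hF : HasGrowth c F) {a : ℝ} (ha : 0 < a)
    (ha1 : a ≤ 1) : HasGrowth (a * c) (fun t => F (a * t)) := by
  intro ε h0 h1
  obtain ⟨C, hC⟩ := hF ε h0 h1
  have hC0 : 0 ≤ C := by
    have := (abs_nonneg _).trans (hC 1 one_pos)
    rw [Real.one_rpow, one_mul] at this
    exact nonneg_of_mul_nonneg_left this (Real.exp_pos _)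
  refine ⟨C * a ^ (-ε), fun t ht => (hC (a * t) (by positivity)).trans ?_⟩
  rw [Real.mul_rpow ha.le ht.le, mul_assoc, mul_assoc]
  have h2 : ε * (a * t) ≤ ε * t := by
    gcongr
    exact mul_le_of_le_one_left ht.le ha1
  gcongr ?_ * (?_ * (?_ * Real.exp ?_))
  linarith

lemma hasGrowth_coshMoment_zero : HasGrowth (-1) (coshMoment 0) := by
  intro ε h0 h1
  refine ⟨∫ u in Set.Ioi (0:ℝ), 2 ^ ε * Real.exp (-ε * u), fun t ht => ?_⟩
  rw [abs_of_nonneg (coshMoment_nonneg 0 t), ← integral_mul_const]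
  refine setIntegral_mono_on (integrableOn_coshMoment 0 ht)
    (((exp_neg_integrableOn_Ioi 0 h0).const_mul _).mul_const _) measurableSet_Ioi fun u _ => ?_
  have hc := Real.one_le_cosh u
  -- the exponential is split as `e^{-(1-ε) t cosh u} e^{-ε t cosh u}`; the second factor
  -- supplies both the power of `t` and the integrability in `u`
  have e1 : Real.exp (-t * Real.cosh u)
      = Real.exp (-((1 - ε) * t * Real.cosh u)) * Real.exp (-(ε * (t * Real.cosh u))) := by
    rw [← Real.exp_add]; congr 1; ring
  have e2 : Real.exp (-((1 - ε) * t * Real.cosh u)) ≤ Real.exp ((-1 + ε) * t) := by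
    have : 0 ≤ (1 - ε) * t := mul_nonneg (by linarith) ht.le
    gcongr
    nlinarith
  have e3 : Real.exp (-(ε * (t * Real.cosh u))) ≤ t ^ (-ε) * (2 ^ ε * Real.exp (-ε * u)) := by
    refine (exp_neg_le_rpow (by positivity) h0).trans ?_
    rw [Real.mul_rpow ht.le (by positivity)]
    gcongr
    have h2 : Real.exp u / 2 ≤ Real.cosh u := by linarith [exp_le_two_cosh u]
    calc Real.cosh u ^ (-ε) ≤ (Real.exp u / 2) ^ (-ε) :=
          Real.rpow_le_rpow_of_nonpos (by positivity) h2 (by linarith)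
      _ = 2 ^ ε * Real.exp (-ε * u) := by
          rw [Real.div_rpow (by positivity) (by positivity), Real.rpow_neg (by positivity) ε,
            Real.rpow_neg (by positivity) ε, ← Real.exp_mul, neg_mul, Real.exp_neg, mul_comm u ε]
          field_simp
  rw [pow_zero, one_mul, e1]
  calc _ ≤ Real.exp ((-1 + ε) * t) * (t ^ (-ε) * (2 ^ ε * Real.exp (-ε * u))) := by gcongr
    _ = _ := by ring

lemma hasGrowth_cosMoment_zero : HasGrowth 1 (cosMoment 0) :=
  (HasGrowth.exp 1).mono fun t ht => by
    rw [Real.abs_exp, one_mul]; exact abs_cosMoment_le 0 ht.le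

/-! ### Families of Bessel integrals and their derivatives -/

/-- The derivatives and bounds which allow differentiating `∫₀^∞ g(xt) tᵐ W(t) dt` in
`x ∈ (0,2)` arbitrarily often under the integral sign: `g` solves the modified Bessel equation
`g'' = g - g'/t` on `(0, ∞)`, with `h = g'`, and locally uniformly in `x` the products of `g(xt)`
and `t h(xt)` with the weight `W` decay exponentially. -/
structure BesselSystem (g h W : ℝ → ℝ) : Prop where
  hg : ∀ t, 0 < t → HasDerivAt g (h t) t
  hh : ∀ t, 0 < t → HasDerivAt h (g t - h t / t) t
  hW : ContinuousOn W (Set.Ioi 0)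
  bound : ∀ a b : ℝ, 0 < a → a < 1 → 1 < b → b < 2 → ∃ B : ℝ → ℝ, ContinuousOn B (Set.Ioi 0) ∧
    (∃ c, c < 0 ∧ HasGrowth c (fun t => B t * W t)) ∧
    ∀ x ∈ Set.Ioo a b, ∀ t, 0 < t → |g (x * t)| ≤ B t ∧ |t * h (x * t)| ≤ B t

/-- The integrand `g(xt) tᵐ W(t)` for even `m`, and `h(xt) tᵐ W(t)` for odd `m`. -/
noncomputable def kern (g h W : ℝ → ℝ) (m : ℕ) (x t : ℝ) : ℝ :=
  (if Even m then g (x * t) else h (x * t)) * t ^ m * W t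

/-- `∫₀^∞ g(xt) tᵐ W(t) dt` for even `m`, and `∫₀^∞ h(xt) tᵐ W(t) dt` for odd `m`. -/
noncomputable def fam (g h W : ℝ → ℝ) (m : ℕ) (x : ℝ) : ℝ :=
  ∫ t in Set.Ioi (0:ℝ), kern g h W m x t

lemma exists_nhd {x : ℝ} (hx : x ∈ Set.Ioo (0:ℝ) 2) :
    ∃ a b : ℝ, 0 < a ∧ a < 1 ∧ 1 < b ∧ b < 2 ∧ x ∈ Set.Ioo a b := by
  obtain ⟨h0, h2⟩ := hx
  refine ⟨min (x / 2) (1 / 2), max ((x + 2) / 2) (3 / 2), lt_min (by linarith) (by norm_num),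
    (min_le_right _ _).trans_lt (by norm_num), lt_of_lt_of_le (by norm_num) (le_max_right _ _),
    max_lt (by linarith) (by norm_num), (min_le_left _ _).trans_lt (by linarith),
    lt_of_lt_of_le (by linarith) (le_max_left _ _)⟩

namespace BesselSystem

variable {g h W : ℝ → ℝ} (S : BesselSystem g h W)
include S

lemma continuousOn_kern (m : ℕ) {x : ℝ} (hx : 0 < x) :
    ContinuousOn (kern g h W m x) (Set.Ioi 0) := by
  have hgc : ContinuousOn (fun t => g (x * t)) (Set.Ioi 0) := fun t ht =>
    ((S.hg (x * t) (mul_pos hx ht)).continuousAt.comp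
      (f := fun t => x * t) (by fun_prop)).continuousWithinAt
  have hhc : ContinuousOn (fun t => h (x * t)) (Set.Ioi 0) := fun t ht =>
    ((S.hh (x * t) (mul_pos hx ht)).continuousAt.comp
      (f := fun t => x * t) (by fun_prop)).continuousWithinAt
  unfold kern
  have := S.hW
  split_ifs
  · exact (hgc.mul (by fun_prop)).mul this
  · exact (hhc.mul (by fun_prop)).mul this

lemma hasDerivAt_kern (m : ℕ) {x t : ℝ} (hx : 0 < x) (ht : 0 < t) :
    HasDerivAt (fun x => kern g h W m x t)
      (kern g h W (m + 1) x t - (m % 2 : ℕ) * kern g h W m x t / x) x := by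
  have hxt : HasDerivAt (fun x => x * t) t x := by simpa using (hasDerivAt_id x).mul_const t
  unfold kern
  rcases Nat.even_or_odd m with hm | hm
  · have h1 : ¬ Even (m + 1) := by simpa [Nat.even_add_one] using hm
    simp only [hm, h1, if_true, if_false, Nat.even_iff.1 hm]
    refine ((((S.hg _ (mul_pos hx ht)).comp x hxt).mul_const (t ^ m)).mul_const
      (W t)).congr_deriv ?_
    push_cast; ring
  · have h0 : ¬ Even m := Nat.not_even_iff_odd.2 hm
    have h1 : Even (m + 1) := hm.add_one
    simp only [h0, h1, if_true, if_false, Nat.odd_iff.1 hm]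
    refine ((((S.hh _ (mul_pos hx ht)).comp x hxt).mul_const (t ^ m)).mul_const
      (W t)).congr_deriv ?_
    push_cast
    field_simp
    ring

/-- Locally uniform integrable bounds for the integrands. -/
lemma exists_bound {a b : ℝ} (ha : 0 < a) (ha1 : a < 1) (hb1 : 1 < b) (hb : b < 2) (m : ℕ) :
    ∃ Q : ℝ → ℝ, IntegrableOn Q (Set.Ioi 0) ∧
      ∀ x ∈ Set.Ioo a b, ∀ t, 0 < t → |kern g h W m x t| ≤ Q t := by
  obtain ⟨B, hBc, ⟨c, hc, hgr⟩, hB⟩ := S.bound a b ha ha1 hb1 hb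
  have hWc := S.hW
  -- for odd `m` one power of `t` goes with `h`
  refine ⟨fun t => |(B t * W t) * (t ^ m + t ^ (m - 1))|, ?_, fun x hx t ht => ?_⟩
  · refine Integrable.abs ?_
    have hp : ∀ n : ℕ, HasGrowth 0 (fun t => t ^ n) := fun n => by simpa using HasGrowth.id.pow n
    have := hgr.mul ((hp m).add (hp (m - 1)))
    rw [add_zero] at this
    exact this.integrableOn hc (by fun_prop)
  · obtain ⟨h1, h2⟩ := hB x hx t ht
    have hB0 : 0 ≤ B t := (abs_nonneg _).trans h1
    simp only
    rw [abs_mul (B t * W t), abs_mul (B t), abs_of_nonneg hB0,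
      abs_of_nonneg (by positivity : 0 ≤ t ^ m + t ^ (m - 1)), kern, abs_mul]
    have key : |(if Even m then g (x * t) else h (x * t)) * t ^ m| ≤
        B t * (t ^ m + t ^ (m - 1)) := by
      rcases Nat.even_or_odd m with hm | hm
      · simp only [hm, if_true]
        rw [abs_mul, abs_of_pos (pow_pos ht m)]
        gcongr
        linarith [pow_pos ht (m - 1)]
      · have h0 : ¬ Even m := Nat.not_even_iff_odd.2 hm
        obtain ⟨k, rfl⟩ := hm
        simp only [h0, if_false, Nat.add_sub_cancel]
        have : h (x * t) * t ^ (2 * k + 1) = (t * h (x * t)) * t ^ (2 * k) := by ring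
        rw [this, abs_mul, abs_of_pos (pow_pos ht (2 * k))]
        gcongr
        linarith [pow_pos ht (2 * k + 1)]
    calc _ ≤ B t * (t ^ m + t ^ (m - 1)) * |W t| := by gcongr
      _ = _ := by ring

lemma integrableOn_kern (m : ℕ) {x : ℝ} (hx : x ∈ Set.Ioo (0:ℝ) 2) :
    IntegrableOn (kern g h W m x) (Set.Ioi 0) := by
  obtain ⟨a, b, ha, ha1, hb1, hb, hxab⟩ := exists_nhd hx
  obtain ⟨Q, hQ, hle⟩ := S.exists_bound ha ha1 hb1 hb m
  refine hQ.mono' ((S.continuousOn_kern m hx.1).aestronglyMeasurable measurableSet_Ioi) ?_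
  exact (ae_restrict_mem measurableSet_Ioi).mono fun t ht => hle x hxab t ht

lemma hasDerivAt_fam (m : ℕ) {x : ℝ} (hx : x ∈ Set.Ioo (0:ℝ) 2) :
    HasDerivAt (fam g h W m)
      (fam g h W (m + 1) x - (m % 2 : ℕ) * fam g h W m x / x) x := by
  obtain ⟨a, b, ha, ha1, hb1, hb, hxab⟩ := exists_nhd hx
  obtain ⟨Q, hQ, hle⟩ := S.exists_bound ha ha1 hb1 hb m
  obtain ⟨Q', hQ', hle'⟩ := S.exists_bound ha ha1 hb1 hb (m + 1)
  have hmeas : ∀ k y, 0 < y → AEStronglyMeasurable (kern g h W k y)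
      (volume.restrict (Set.Ioi 0)) := fun k y hy =>
    (S.continuousOn_kern k hy).aestronglyMeasurable measurableSet_Ioi
  have hm1 : ((m % 2 : ℕ) : ℝ) ≤ 1 := by
    exact_mod_cast Nat.lt_succ_iff.1 (Nat.mod_lt m two_pos)
  have hd := (hasDerivAt_integral_of_dominated_loc_of_deriv_le
    (μ := volume.restrict (Set.Ioi (0:ℝ))) (F := fun x t => kern g h W m x t)
    (F' := fun x t => kern g h W (m + 1) x t - (m % 2 : ℕ) * kern g h W m x t / x)
    (bound := fun t => Q' t + Q t / a) (x₀ := x) (Ioo_mem_nhds hxab.1 hxab.2)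
    ?_ (S.integrableOn_kern m hx) ?_ ?_ (hQ'.add (hQ.div_const a)) ?_).2
  · refine hd.congr_deriv ?_
    rw [integral_sub (S.integrableOn_kern (m + 1) hx)
      (((S.integrableOn_kern m hx).const_mul _).div_const x), integral_div, integral_const_mul]
    rfl
  · filter_upwards [Ioi_mem_nhds hx.1] with y hy using hmeas m y hy
  · simp only [mul_div_right_comm]
    exact (hmeas (m + 1) x hx.1).sub ((hmeas m x hx.1).const_mul _)
  · refine (ae_restrict_mem measurableSet_Ioi).mono fun t ht y hy => ?_
    have hy0 : 0 < y := ha.trans hy.1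
    have h1 := hle y hy t ht
    have h2 : |(m % 2 : ℕ) * kern g h W m y t / y| ≤ Q t / a := by
      rw [abs_div, abs_mul, Nat.abs_cast, abs_of_pos hy0]
      have hQ0 : 0 ≤ Q t := (abs_nonneg _).trans h1
      have := hy.1.le
      calc _ ≤ 1 * Q t / a := by gcongr
        _ = _ := by rw [one_mul]
    exact (norm_sub_le _ _).trans (add_le_add (hle' y hy t ht) h2)
  · exact (ae_restrict_mem measurableSet_Ioi).mono fun t ht y hy =>
      S.hasDerivAt_kern m (ha.trans hy.1) ht

end BesselSystem

/-! ### Iterated derivatives -/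

section IteratedDeriv

open Polynomial

/-- Polynomials in `1/x` expressing the `l`-th derivative of the `0`-th member of a family with
`A_m' = A_{m+1} - (m mod 2) A_m / x` as a combination of `A_0, …, A_l`. -/
noncomputable def derivCoeff : ℕ → ℕ → ℝ[X]
  | 0, m => if m = 0 then 1 else 0
  | l + 1, 0 => -X ^ 2 * derivative (derivCoeff l 0)
  | l + 1, m + 1 => -X ^ 2 * derivative (derivCoeff l (m + 1))
      - (((m + 1) % 2 : ℕ) : ℝ[X]) * X * derivCoeff l (m + 1) + derivCoeff l m

lemma derivCoeff_eq_zero {l m : ℕ} (h : l < m) : derivCoeff l m = 0 := by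
  induction l generalizing m with
  | zero => simp [derivCoeff, h.ne']
  | succ l ih =>
    obtain ⟨m, rfl⟩ : ∃ k, m = k + 1 := ⟨m - 1, by omega⟩
    simp [derivCoeff, ih (show l < m by omega), ih (show l < m + 1 by omega)]

lemma derivCoeff_self (l : ℕ) : derivCoeff l l = 1 := by
  induction l with
  | zero => simp [derivCoeff]
  | succ l ih => simp [derivCoeff, ih, derivCoeff_eq_zero (Nat.lt_succ_self l)]

lemma iteratedDeriv_family {A : ℕ → ℝ → ℝ} {s : Set ℝ} (hs : IsOpen s) (h0 : (0:ℝ) ∉ s)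
    (hA : ∀ m, ∀ x ∈ s, HasDerivAt (A m) (A (m + 1) x - (m % 2 : ℕ) * A m x / x) x) (l : ℕ) :
    ∀ x ∈ s, iteratedDeriv l (A 0) x
      = ∑ m ∈ Finset.range (l + 1), (derivCoeff l m).eval x⁻¹ * A m x := by
  induction l with
  | zero => intro x _; simp [derivCoeff]
  | succ l ih =>
    intro x hx
    have hx0 : x ≠ 0 := fun h => h0 (h ▸ hx)
    have hev : iteratedDeriv l (A 0) =ᶠ[nhds x]
        fun y => ∑ m ∈ Finset.range (l + 1), (derivCoeff l m).eval y⁻¹ * A m y := by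
      filter_upwards [hs.mem_nhds hx] with y hy using ih y hy
    rw [iteratedDeriv_succ, hev.deriv_eq]
    have hd : HasDerivAt
        (fun y => ∑ m ∈ Finset.range (l + 1), (derivCoeff l m).eval y⁻¹ * A m y)
        (∑ m ∈ Finset.range (l + 1), ((derivative (derivCoeff l m)).eval x⁻¹ * (-(x ^ 2)⁻¹) * A m x
          + (derivCoeff l m).eval x⁻¹ * (A (m + 1) x - (m % 2 : ℕ) * A m x / x))) x :=
      HasDerivAt.fun_sum fun m _ =>
        (((derivCoeff l m).hasDerivAt x⁻¹).comp x (hasDerivAt_inv hx0)).mul (hA m x hx)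
    rw [hd.deriv]
    -- the terms with `A_{m+1}` are shifted by one, and `derivCoeff l (l + 1) = 0` extends
    -- the others
    have e1 : ∑ m ∈ Finset.range (l + 1), ((derivative (derivCoeff l m)).eval x⁻¹ * (-(x ^ 2)⁻¹)
          * A m x + (derivCoeff l m).eval x⁻¹ * (A (m + 1) x - (m % 2 : ℕ) * A m x / x))
        = ∑ m ∈ Finset.range (l + 1), (derivCoeff l m).eval x⁻¹ * A (m + 1) x
        + ∑ m ∈ Finset.range (l + 2), ((derivative (derivCoeff l m)).eval x⁻¹ * (-(x ^ 2)⁻¹)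
          - (m % 2 : ℕ) * x⁻¹ * (derivCoeff l m).eval x⁻¹) * A m x := by
      rw [Finset.sum_range_succ _ (l + 1), derivCoeff_eq_zero (Nat.lt_succ_self l)]
      simp only [derivative_zero, eval_zero, zero_mul, mul_zero, sub_zero, add_zero]
      rw [← Finset.sum_add_distrib]
      refine Finset.sum_congr rfl fun m _ => ?_
      ring
    rw [e1, Finset.sum_range_succ' _ (l + 1), Finset.sum_range_succ' _ (l + 1), ← add_assoc,
      ← Finset.sum_add_distrib]
    congr 1
    · refine Finset.sum_congr rfl fun m _ => ?_
      simp only [derivCoeff, eval_add, eval_sub, eval_mul, eval_neg, eval_pow, eval_X, eval_natCast]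
      ring
    · simp only [derivCoeff, eval_mul, eval_neg, eval_pow, eval_X, Nat.zero_mod, Nat.cast_zero]
      ring

/-- The Wronskian may be computed with the members of the family in place of the derivatives,
the transition matrix being lower unitriangular. -/
lemma det_iteratedDeriv {n : ℕ} {A : Fin n → ℕ → ℝ → ℝ} {s : Set ℝ} (hs : IsOpen s)
    (h0 : (0:ℝ) ∉ s)
    (hA : ∀ i m, ∀ x ∈ s, HasDerivAt (A i m) (A i (m + 1) x - (m % 2 : ℕ) * A i m x / x) x)
    {x : ℝ} (hx : x ∈ s) :
    Matrix.det (Matrix.of fun l i : Fin n => iteratedDeriv (l : ℕ) (A i 0) x)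
      = Matrix.det (Matrix.of fun l i : Fin n => A i l x) := by
  let T : Matrix (Fin n) (Fin n) ℝ := Matrix.of fun l m => (derivCoeff l m).eval x⁻¹
  have hT : T.det = 1 := by
    rw [Matrix.det_of_isLowerTriangular]
    · simp [T, derivCoeff_self]
    · intro i j hij
      have : (i : ℕ) < j := hij
      simp [T, derivCoeff_eq_zero this]
  have hmul : (Matrix.of fun l i : Fin n => iteratedDeriv (l : ℕ) (A i 0) x)
      = T * (Matrix.of fun l i : Fin n => A i l x) := by
    ext l i
    rw [Matrix.mul_apply]
    simp only [Matrix.of_apply, T]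
    rw [iteratedDeriv_family hs h0 (hA i) l x hx,
      Fin.sum_univ_eq_sum_range (fun m => (derivCoeff l m).eval x⁻¹ * A i m x) n]
    refine Finset.sum_subset (Finset.range_mono l.2) fun m _ hm => ?_
    have : (l : ℕ) < m := by simpa using hm
    simp [derivCoeff_eq_zero this]
  rw [hmul, Matrix.det_mul, hT, one_mul]

end IteratedDeriv

/-! ### The determinant of an interleaved block matrix -/

/-- The identification of `Fin r ⊕ Fin (r + 1)` with `Fin (2 * r + 1)`, left summand first. -/
def colEquiv (r : ℕ) : Fin r ⊕ Fin (r + 1) ≃ Fin (2 * r + 1) :=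
  finSumFinEquiv.trans (finCongr (by omega))

/-- The identification of `Fin r ⊕ Fin (r + 1)` with `Fin (2 * r + 1)` sending the left summand to
the odd numbers and the right summand to the even numbers. -/
noncomputable def rowEquiv (r : ℕ) : Fin r ⊕ Fin (r + 1) ≃ Fin (2 * r + 1) :=
  Equiv.ofBijective
    (Sum.elim (fun j => ⟨2 * j + 1, by omega⟩) (fun j => ⟨2 * j, by omega⟩)) <| by
    rw [Fintype.bijective_iff_injective_and_card]
    constructor
    · rintro (a | a) (b | b) h <;> simp [Fin.ext_iff] at h <;> first | omega | (congr 1; omega)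
    · simp; omega

lemma rowEquiv_inl (r : ℕ) (j : Fin r) : (rowEquiv r (Sum.inl j) : ℕ) = 2 * j + 1 := rfl

lemma rowEquiv_inr (r : ℕ) (j : Fin (r + 1)) : (rowEquiv r (Sum.inr j) : ℕ) = 2 * j := rfl

lemma colEquiv_inl (r : ℕ) (j : Fin r) : (colEquiv r (Sum.inl j) : ℕ) = j := by simp [colEquiv]

lemma colEquiv_inr (r : ℕ) (j : Fin (r + 1)) : (colEquiv r (Sum.inr j) : ℕ) = r + j := by
  simp [colEquiv]

lemma shuffle_val (r : ℕ) (i : Fin (2 * r + 1)) :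
    (((colEquiv r).symm.trans (rowEquiv r)) i : ℕ)
      = if (i : ℕ) < r then 2 * (i : ℕ) + 1 else 2 * ((i : ℕ) - r) := by
  obtain ⟨a, rfl⟩ := (colEquiv r).surjective i
  rcases a with a | a
  · simp [colEquiv_inl, rowEquiv_inl]
  · simp [colEquiv_inr, rowEquiv_inr]

/-- The inversions of the shuffle `1, 3, …, 2r - 1, 0, 2, …, 2r`: the entry `2i + 1` precedes the
`i + 1` smaller entries `0, 2, …, 2i`. -/
lemma sign_shuffle (r : ℕ) :
    Equiv.Perm.sign ((colEquiv r).symm.trans (rowEquiv r)) = (-1) ^ (r * (r + 1) / 2) := by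
  rw [Equiv.Perm.sign_eq_prod_prod_Ioi]
  have hin : ∀ i : Fin (2 * r + 1), (∏ j > i, if ((colEquiv r).symm.trans (rowEquiv r)) i
      < ((colEquiv r).symm.trans (rowEquiv r)) j then (1 : ℤˣ) else -1)
      = if (i : ℕ) < r then (-1) ^ ((i : ℕ) + 1) else 1 := by
    intro i
    simp only [Fin.lt_def, shuffle_val]
    split_ifs with hi
    · rw [Finset.prod_ite, Finset.prod_const_one, one_mul, Finset.prod_const]
      congr 1
      have : (Finset.filter (fun j : Fin (2 * r + 1) => ¬ (2 * (i : ℕ) + 1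
          < if (j : ℕ) < r then 2 * (j : ℕ) + 1 else 2 * ((j : ℕ) - r))) (Finset.Ioi i))
          = Finset.Icc ⟨r, by omega⟩ ⟨r + i, by omega⟩ := by
        ext j
        simp only [Finset.mem_filter, Finset.mem_Ioi, Finset.mem_Icc, Fin.lt_def, Fin.le_def]
        split_ifs <;> omega
      rw [this, Fin.card_Icc]
      simp only
      omega
    · refine Finset.prod_eq_one fun j hj => ?_
      have hj' : (i : ℕ) < j := Fin.lt_def.1 (Finset.mem_Ioi.1 hj)
      rw [if_neg (show ¬ (j : ℕ) < r by omega), if_pos (by omega)]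
  rw [Finset.prod_congr rfl fun i _ => hin i,
    Fin.prod_univ_eq_prod_range (fun i => if i < r then (-1 : ℤˣ) ^ (i + 1) else 1),
    ← Finset.prod_subset (Finset.range_mono (show r ≤ 2 * r + 1 by omega))
      (fun i _ hi => if_neg fun h => hi (Finset.mem_range.2 h)),
    Finset.prod_congr rfl fun i hi => if_pos (Finset.mem_range.1 hi), Finset.prod_pow_eq_pow_sum]
  congr 1
  have h := Finset.sum_range_id_mul_two (r + 1)
  rw [Finset.sum_range_succ'] at h
  simp only [add_zero, Nat.add_sub_cancel] at h
  rw [mul_comm r, ← h, Nat.mul_div_cancel _ two_pos]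

/-- If the even rows of the first `r` columns agree with columns `r + 1, …, 2r`, then subtracting
these and collecting the odd rows first makes the matrix block triangular. -/
lemma det_interleave (r : ℕ) (A : ℕ → ℕ → ℝ) (P : Matrix (Fin r) (Fin r) ℝ)
    (Q : Matrix (Fin (r + 1)) (Fin (r + 1)) ℝ)
    (hQ : ∀ j k : Fin (r + 1), A (2 * j) (r + k) = Q j k)
    (hQ' : ∀ (j : Fin (r + 1)) (i : Fin r), A (2 * j) i = Q j i.succ)
    (hP : ∀ j i : Fin r, A (2 * j + 1) i - A (2 * j + 1) (r + (i + 1)) = P j i) :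
    Matrix.det (Matrix.of fun l i : Fin (2 * r + 1) => A l i)
      = (-1) ^ (r * (r + 1) / 2) * P.det * Q.det := by
  set M : Matrix (Fin (2 * r + 1)) (Fin (2 * r + 1)) ℝ := Matrix.of fun l i => A l i with hM
  let R : Matrix (Fin r) (Fin (r + 1)) ℝ := Matrix.of fun j k => A (2 * j + 1) (r + k)
  let E : Matrix (Fin (r + 1)) (Fin r) ℝ := Matrix.of fun k i => if k = i.succ then 1 else 0
  have hblock : M.submatrix (rowEquiv r) (colEquiv r)
      = Matrix.fromBlocks P R 0 Q * Matrix.fromBlocks 1 0 E 1 := by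
    rw [Matrix.fromBlocks_multiply]
    ext (j | j) (i | i)
    · have := hP j i
      simp [hM, rowEquiv_inl, colEquiv_inl, Matrix.mul_apply, R, E, ← this]
    · simp [hM, rowEquiv_inl, colEquiv_inr, R]
    · simp [hM, rowEquiv_inr, colEquiv_inl, Matrix.mul_apply, E, hQ']
    · simp [hM, rowEquiv_inr, colEquiv_inr, hQ]
  have hdet : (M.submatrix (rowEquiv r) (colEquiv r)).det = P.det * Q.det := by
    rw [hblock, Matrix.det_mul, Matrix.det_fromBlocks_zero₂₁, Matrix.det_fromBlocks_zero₁₂]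
    simp
  have hperm : M.submatrix (rowEquiv r) (colEquiv r)
      = (M.submatrix ((colEquiv r).symm.trans (rowEquiv r)) id).submatrix
        (colEquiv r) (colEquiv r) := by
    ext a b
    simp
  rw [hperm, Matrix.det_submatrix_equiv_self, Matrix.det_permute, sign_shuffle] at hdet
  push_cast at hdet
  rw [mul_assoc, ← hdet, ← mul_assoc, ← mul_pow]
  simp

/-! ### The Bessel families and the evaluation at `1` -/

/-- The weight `I₀ᵏ K₀ⁿ`. -/
noncomputable def besselWeight (k n : ℕ) (t : ℝ) : ℝ := I0 t ^ k * K0 t ^ n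

lemma continuousOn_coshMoment (n : ℕ) : ContinuousOn (coshMoment n) (Set.Ioi 0) := fun _ ht =>
  (hasDerivAt_coshMoment n ht).continuousAt.continuousWithinAt

lemma continuous_cosMoment (n : ℕ) : Continuous (cosMoment n) :=
  continuous_iff_continuousAt.2 fun t => (hasDerivAt_cosMoment n t).continuousAt

lemma continuousOn_besselWeight (k n : ℕ) : ContinuousOn (besselWeight k n) (Set.Ioi 0) := by
  have h1 := (continuous_cosMoment 0).continuousOn (s := Set.Ioi 0)
  have h2 := continuousOn_coshMoment 0
  have : besselWeight k n = fun t => cosMoment 0 t ^ k * coshMoment 0 t ^ n := by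
    funext t; rw [besselWeight, I0_eq, K0_eq]
  rw [this]
  exact (h1.pow k).mul (h2.pow n)

lemma hasGrowth_besselWeight (k n : ℕ) : HasGrowth (k - n) (besselWeight k n) := by
  have : besselWeight k n = fun t => cosMoment 0 t ^ k * coshMoment 0 t ^ n := by
    funext t; rw [besselWeight, I0_eq, K0_eq]
  rw [this]
  have := (hasGrowth_cosMoment_zero.pow k).mul (hasGrowth_coshMoment_zero.pow n)
  convert this using 1
  ring

/-- `e^{xt}` with `x < 2` is beaten by weights decaying at least like `e^{-2t}`. -/
lemma besselSystem_I {k n : ℕ} (h : k + 2 ≤ n) :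
    BesselSystem (cosMoment 0) (cosMoment 1) (besselWeight k n) where
  hg t _ := hasDerivAt_cosMoment 0 t
  hh t ht := by
    refine (hasDerivAt_cosMoment 1 t).congr_deriv ?_
    have := cosMoment_ode t
    field_simp
    linarith
  hW := continuousOn_besselWeight k n
  bound a b ha _ _ hb2 := by
    refine ⟨fun t => (1 + t) * Real.exp (b * t), by fun_prop,
      ⟨0 + b + (k - n), ?_, ((HasGrowth.one.add HasGrowth.id).mul (HasGrowth.exp b)).mul
        (hasGrowth_besselWeight k n)⟩, fun x hx t ht => ?_⟩
    · have : (k : ℝ) + 2 ≤ n := by exact_mod_cast h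
      linarith
    · have hx0 : 0 < x := ha.trans hx.1
      have hle : ∀ m, |cosMoment m (x * t)| ≤ Real.exp (b * t) := fun m => by
        refine (abs_cosMoment_le m (mul_pos hx0 ht).le).trans ?_
        have := hx.2.le
        gcongr
      have he := Real.exp_pos (b * t)
      constructor
      · nlinarith [hle 0]
      · rw [abs_mul, abs_of_pos ht]
        nlinarith [hle 1]

/-- `K₀(xt)` decays exponentially, so that weights without exponential growth suffice. -/
lemma besselSystem_K {k n : ℕ} (h : k ≤ n) :
    BesselSystem (coshMoment 0) (fun t => -coshMoment 1 t) (besselWeight k n) where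
  hg t ht := hasDerivAt_coshMoment 0 ht
  hh t ht := by
    refine (hasDerivAt_coshMoment 1 ht).neg.congr_deriv ?_
    have := coshMoment_ode ht
    field_simp
    linarith
  hW := continuousOn_besselWeight k n
  bound a b ha ha1 _ _ := by
    have hK : HasGrowth (-a) (fun t => coshMoment 0 (a * t)) := by
      simpa using hasGrowth_coshMoment_zero.comp_mul ha ha1.le
    refine ⟨fun t => coshMoment 0 (a * t) + (1 / a * Real.exp (-a * t)
      + t * coshMoment 0 (a * t)), ?_, ⟨-a + (k - n), ?_, ?_⟩, fun x hx t ht => ?_⟩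
    · have hc : ContinuousOn (fun t => coshMoment 0 (a * t)) (Set.Ioi 0) :=
        (continuousOn_coshMoment 0).comp (by fun_prop) fun t ht => mul_pos ha ht
      fun_prop
    · have : (k : ℝ) ≤ n := by exact_mod_cast h
      linarith
    · have hid : HasGrowth (-a) (fun t => t * coshMoment 0 (a * t)) := by
        simpa using HasGrowth.id.mul hK
      exact (hK.add (((HasGrowth.exp (-a)).const_mul (1 / a)).add hid)).mul
        (hasGrowth_besselWeight k n)
    · have hat : 0 < a * t := mul_pos ha ht
      have hle : a * t ≤ x * t := by have := hx.1.le; gcongr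
      have h0 := coshMoment_nonneg 0 (a * t)
      have h1 : 0 ≤ 1 / a * Real.exp (-a * t) := by positivity
      have h2 : 0 ≤ t * coshMoment 0 (a * t) := by positivity
      constructor
      · rw [abs_of_nonneg (coshMoment_nonneg 0 _)]
        linarith [coshMoment_antitone 0 hat hle]
      · rw [mul_neg, abs_neg, abs_of_nonneg (mul_nonneg ht.le (coshMoment_nonneg 1 _))]
        have h3 := mul_le_mul_of_nonneg_left
          ((coshMoment_antitone 1 hat hle).trans (coshMoment_one_le' hat)) ht.le
        have h4 : t * (Real.exp (-(a * t)) / (a * t) + coshMoment 0 (a * t))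
            = 1 / a * Real.exp (-a * t) + t * coshMoment 0 (a * t) := by
          rw [neg_mul]; field_simp
        linarith

/-- The family generated by `f r i`. -/
noncomputable def besselFam (r i m : ℕ) (x : ℝ) : ℝ :=
  if i < r then fam (cosMoment 0) (cosMoment 1) (besselWeight i (2 * r - i)) m x
  else fam (coshMoment 0) (fun t => -coshMoment 1 t) (besselWeight (i - r) (3 * r - i)) m x

lemma f_eq_besselFam (r : ℕ) (i : Fin (2 * r + 1)) : f r i = besselFam r i 0 := by
  funext x
  unfold f besselFam fam kern besselWeight
  simp only [Even.zero, if_true, pow_zero, mul_one, I0_eq, K0_eq, mul_assoc]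

lemma hasDerivAt_besselFam (r : ℕ) (i : Fin (2 * r + 1)) (m : ℕ) {x : ℝ}
    (hx : x ∈ Set.Ioo (0:ℝ) 2) :
    HasDerivAt (besselFam r i m)
      (besselFam r i (m + 1) x - (m % 2 : ℕ) * besselFam r i m x / x) x := by
  unfold besselFam
  split_ifs with hi
  · exact (besselSystem_I (by omega)).hasDerivAt_fam m hx
  · exact (besselSystem_K (by omega)).hasDerivAt_fam m hx

/-- At `x = 1` the even members of the `I₀`-family are Bessel moments, since `I₀(t)` merely joins
the weight. -/
lemma fam_I_even (k n j : ℕ) :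
    fam (cosMoment 0) (cosMoment 1) (besselWeight k n) (2 * j) 1
      = IKM (k + 1 + n) (k + 1) (2 * j) := by
  unfold fam kern besselWeight IKM
  simp only [even_two_mul, if_true, one_mul, I0_eq, K0_eq, Nat.add_sub_cancel_left]
  refine integral_congr_ae (Filter.Eventually.of_forall fun t => ?_)
  simp only
  ring

lemma fam_K_even (k n j : ℕ) :
    fam (coshMoment 0) (fun t => -coshMoment 1 t) (besselWeight k n) (2 * j) 1
      = IKM (k + (n + 1)) k (2 * j) := by
  unfold fam kern besselWeight IKM
  simp only [even_two_mul, if_true, one_mul, I0_eq, K0_eq, Nat.add_sub_cancel_left]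
  refine integral_congr_ae (Filter.Eventually.of_forall fun t => ?_)
  simp only
  ring

/-- At `x = 1` the odd members of the two families differ by the Wronskian `1/t` of `I₀` and
`K₀`, which leaves a moment with two Bessel factors fewer. -/
lemma fam_odd_sub {k n : ℕ} (h : k + 1 ≤ n) (j : ℕ) :
    fam (cosMoment 0) (cosMoment 1) (besselWeight k (n + 1)) (2 * j + 1) 1
      - fam (coshMoment 0) (fun t => -coshMoment 1 t) (besselWeight (k + 1) n) (2 * j + 1) 1
      = IKM (k + n) k (2 * j) := by
  have h1 : (1:ℝ) ∈ Set.Ioo (0:ℝ) 2 := by constructor <;> norm_num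
  unfold fam
  rw [← integral_sub ((besselSystem_I (by omega)).integrableOn_kern _ h1)
    ((besselSystem_K h).integrableOn_kern _ h1), IKM]
  refine setIntegral_congr_fun measurableSet_Ioi fun t ht => ?_
  have hodd : ¬ Even (2 * j + 1) := by simp
  simp only [kern, besselWeight, hodd, if_false, one_mul, I0_eq, K0_eq, Nat.add_sub_cancel_left]
  linear_combination (cosMoment 0 t ^ k * coshMoment 0 t ^ n * t ^ (2 * j)) * wronskian_I_K ht

theorem wronskian_odd_at_one (r : ℕ) (hr : 1 ≤ r) :
    w r 1 = (-1 : ℝ) ^ (r * (r + 1) / 2) * (Mmat r).det * (Mmat (r + 1)).det := by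
  have h1 : (1:ℝ) ∈ Set.Ioo (0:ℝ) 2 := by constructor <;> norm_num
  have hw : w r 1 = Matrix.det (Matrix.of fun l i : Fin (2 * r + 1) => besselFam r i l 1) := by
    unfold w
    simp only [f_eq_besselFam]
    exact det_iteratedDeriv (A := fun i => besselFam r i) isOpen_Ioo (by simp)
      (fun i m x hx => hasDerivAt_besselFam r i m hx) h1
  rw [hw, det_interleave r (fun l i => besselFam r i l 1) (Mmat r).transpose
    (Mmat (r + 1)).transpose, Matrix.det_transpose, Matrix.det_transpose]
  · intro j k
    have hk := k.2
    simp only [besselFam, Matrix.transpose_apply, Mmat, Matrix.of_apply]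
    rw [if_neg (by omega), fam_K_even]
    congr 1 <;> omega
  · intro j i
    have hi := i.2
    simp only [besselFam, Matrix.transpose_apply, Mmat, Matrix.of_apply, Fin.val_succ]
    rw [if_pos hi, fam_I_even]
    congr 1
    omega
  · intro j i
    have hi := i.2
    simp only [besselFam, Matrix.transpose_apply, Mmat, Matrix.of_apply]
    rw [if_pos hi, if_neg (by omega), show 2 * r - (i : ℕ) = (2 * r - 1 - i) + 1 by omega,
      show r + ((i : ℕ) + 1) - r = i + 1 by omega,
      show 3 * r - (r + ((i : ℕ) + 1)) = 2 * r - 1 - i by omega, fam_odd_sub (by omega)]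
    congr 1
    omega
end
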